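/- Assume μ is a martingale measure. Define, for δ > 0, V_Mart(δ) = sup { E_π[f(Y)] − L_δ(E_π[c_N(X, Y)]^{1/p}) : π a bicausal coupling with first marginal μ whose second marginal is a martingale measure and E_π[c_N(X, Y)] < ∞ }, and V_Mart(0) = E_μ[f(X)]. Let H denote the set of predictable processes h = (h_n)_{n=1}^N (each h_n: X → ℝ^d Borel and F_{n−1}-measurable) with ‖h‖_{L^q(μ)} < ∞. Then lim_{δ→0+} (V_Mart(δ) − V_Mart(0))/δ = L*( inf_{h ∈ H} ‖ᵒ𝔻f − h‖_{L^q(μ)} ) = L*( inf_{h ∈ H} ( Σ_{n=1}^N E_μ[ |E_μ[𝔻_n f(X) | F_n] − h_n|_*^q ] )^{1/q} ). -/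

import Mathlib

open MeasureTheory Filter Set
open scoped ENNReal

noncomputable section

/-- Discrete path space `X = (ℝ^d)^N`. -/
abbrev PathD (N d : ℕ) : Type := Fin N → Fin d → ℝ

/-- The `ℓ_e` norm on `ℝ^d`. -/
def lpnorm {d : ℕ} (e : ℝ) (v : Fin d → ℝ) : ℝ := (∑ i, |v i| ^ e) ^ (1 / e)

/-- Coordinate `x_n` of a path, with the convention `x_0 = 0` (and `x_n = 0` for `n > N`). -/
def coord {N d : ℕ} (x : PathD N d) (n : ℕ) : Fin d → ℝ :=
  if h : 1 ≤ n ∧ n ≤ N then x ⟨n - 1, by omega⟩ else 0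

/-- The cost `c_N(x,y) = Σ_{n=1}^N |Δx_n − Δy_n|^p` (with `|·|` the `ℓ_p` norm). -/
def cN {N d : ℕ} (p : ℝ) (x y : PathD N d) : ℝ :=
  ∑ n ∈ Finset.Icc 1 N,
    lpnorm p ((coord x n - coord x (n - 1)) - (coord y n - coord y (n - 1))) ^ p

/-- The σ-algebra `F_n = σ(x_1, …, x_n)` on the discrete path space. -/
def Fn (N d n : ℕ) : MeasurableSpace (PathD N d) :=
  MeasurableSpace.comap (fun x (i : Fin N) => if (i : ℕ) + 1 ≤ n then x i else 0) inferInstance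

/-- Conditional independence of `m₁` and `m₂` given `m'` under `π`, expressed through
conditional expectations of indicators. -/
def CondIndepOn {Ω : Type*} [MeasurableSpace Ω] (π : Measure Ω)
    (m' m₁ m₂ : MeasurableSpace Ω) : Prop :=
  ∀ A B : Set Ω, MeasurableSet[m₁] A → MeasurableSet[m₂] B →
    (π[(A ∩ B).indicator (fun _ => (1 : ℝ)) | m']) =ᵐ[π]
      (π[A.indicator (fun _ => (1 : ℝ)) | m']) * (π[B.indicator (fun _ => (1 : ℝ)) | m'])

/-- `π` is a coupling with first marginal `μ` which is causal to its second marginal: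
for every `n`, `σ(Y_1,…,Y_n)` is conditionally independent of `σ(X_1,…,X_N)` given `F_n`. -/
def IsCausalStar {N d : ℕ} (μ : Measure (PathD N d))
    (π : Measure (PathD N d × PathD N d)) : Prop :=
  π.map Prod.fst = μ ∧
  ∀ n : ℕ, CondIndepOn π ((Fn N d n).comap Prod.fst)
    ((Fn N d n).comap Prod.snd) ((Fn N d N).comap Prod.fst)

/-- `π` is a causal coupling of `(μ, ν)`. -/
def IsCausalCoupling {N d : ℕ} (μ ν : Measure (PathD N d))
    (π : Measure (PathD N d × PathD N d)) : Prop :=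
  π.map Prod.snd = ν ∧ IsCausalStar μ π

/-- `π` is a bicausal coupling of `(μ, ν)`: both `π` and its swap are causal. -/
def IsBicausalCoupling {N d : ℕ} (μ ν : Measure (PathD N d))
    (π : Measure (PathD N d × PathD N d)) : Prop :=
  IsCausalCoupling μ ν π ∧
  (∀ n : ℕ, CondIndepOn π ((Fn N d n).comap Prod.snd)
    ((Fn N d n).comap Prod.fst) ((Fn N d N).comap Prod.snd))

/-- `μ` is a martingale measure on the discrete path space: every coordinate is integrable
and `E_μ[X_n | F_{n−1}] = X_{n−1}` a.s. (with `X_0 = 0`). -/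
def IsMartingaleMeasure {N d : ℕ} (μ : Measure (PathD N d)) : Prop :=
  ∀ n : ℕ, 1 ≤ n → n ≤ N →
    Integrable (fun x => coord x n) μ ∧
    (μ[(fun x => coord x n) | Fn N d (n - 1)]) =ᵐ[μ] (fun x => coord x (n - 1))


/-- The discrete pathwise Malliavin derivative `𝔻_n f = Σ_{k=n}^N ∂_k f`, where `∂_k f` is the
`ℝ^d`-valued partial gradient of `f` in the `k`-th coordinate block (`k = 1, …, N`). -/
def Dn {N d : ℕ} (f : PathD N d → ℝ) (n : ℕ) (x : PathD N d) : Fin d → ℝ :=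
  fun j => ∑ k : Fin N, if n ≤ (k : ℕ) + 1 then
    fderiv ℝ f x (Pi.single k (Pi.single j 1)) else 0

/-- Standing assumptions on the penalty function `L : [0,∞) → [0,∞]`:
continuous, non-decreasing, `L(0) = 0` and `liminf_{u→∞} L(u)/u^p = +∞`. -/
structure PenaltyAssumptions (p : ℝ) (L : ℝ → ℝ≥0∞) : Prop where
  cont : ContinuousOn L (Set.Ici 0)
  mono : MonotoneOn L (Set.Ici 0)
  zero : L 0 = 0
  growth : Tendsto (fun u : ℝ => L u / ENNReal.ofReal (u ^ p)) atTop (nhds ⊤)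

/-- The convex conjugate `L*(v) = sup_{u ≥ 0} { u v − L(u) }`, valued in the extended reals. -/
def Lconj (L : ℝ → ℝ≥0∞) (v : ℝ) : EReal :=
  ⨆ u : {u : ℝ // 0 ≤ u}, ((u.1 * v : ℝ) : EReal) - ((L u.1 : ℝ≥0∞) : EReal)

/-- The expected transport cost `E_π[c_N(X,Y)]` of a coupling. -/
def costD {N d : ℕ} (p : ℝ) (π : Measure (PathD N d × PathD N d)) : ℝ :=
  ∫ z, cN p z.1 z.2 ∂π

/-- The penalised causal DRO value
`V(δ) = sup_{π ∈ Π_c(μ,*), E_π[c_N] < ∞} { E_π[f(Y)] − δ L(E_π[c_N(X,Y)]^{1/p}/δ) }`,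
valued in the extended reals. -/
def VD {N d : ℕ} (p : ℝ) (L : ℝ → ℝ≥0∞) (μ : Measure (PathD N d))
    (f : PathD N d → ℝ) (δ : ℝ) : EReal :=
  ⨆ π : {π : Measure (PathD N d × PathD N d) //
      IsProbabilityMeasure π ∧ IsCausalStar μ π ∧
      Integrable (fun z => cN p z.1 z.2) π},
    ((∫ z, f z.2 ∂π.1 : ℝ) : EReal) -
      ((ENNReal.ofReal δ * L ((costD p π.1) ^ (1 / p) / δ) : ℝ≥0∞) : EReal)

/-- The `L^q(μ)`-norm `(Σ_{n=1}^N E_μ[|E_μ[𝔻_n f(X)|F_n]|_*^q])^{1/q}` of the optional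
projection of the discrete pathwise Malliavin derivative. -/
def optionalNorm {N d : ℕ} (q : ℝ) (μ : Measure (PathD N d)) (f : PathD N d → ℝ) : ℝ :=
  (∑ n ∈ Finset.Icc 1 N, ∫ x, lpnorm q ((μ[Dn f n | Fn N d n]) x) ^ q ∂μ) ^ (1 / q)

/-- The map `v(e) = (e_1|e_1|^{q−2}, …, e_d|e_d|^{q−2})` on `ℝ^d`. -/
def vmap {d : ℕ} (q : ℝ) (e : Fin d → ℝ) : Fin d → ℝ :=
  fun i => e i * |e i| ^ (q - 2)

/-- The inverse `Δ^{-1}` of the increment map: `(Δ^{-1} y)_n = Σ_{k=1}^n y_k`. -/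
def DeltaInv {N d : ℕ} (y : PathD N d) : PathD N d :=
  fun i => ∑ k : Fin N, if (k : ℕ) ≤ (i : ℕ) then y k else 0

/-- A process `h = (h_n)_{n=1}^N` is predictable if `h_n` is `F_{n−1}`-measurable. -/
def IsPredictable {N d : ℕ} (h : ℕ → PathD N d → Fin d → ℝ) : Prop :=
  ∀ n : ℕ, 1 ≤ n → n ≤ N → Measurable[Fn N d (n - 1)] (h n)

end

open MeasureTheory Filter

noncomputable section

/-- The penalised bicausal DRO value under the martingale constraint:
`V_Mart(δ) = sup { E_π[f(Y)] − δ L(E_π[c_N]^{1/p}/δ) }`, the supremum being over bicausal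
couplings `π` with first marginal `μ`, second marginal a martingale measure, and finite cost. -/
def VMartD {N d : ℕ} (p : ℝ) (L : ℝ → ℝ≥0∞) (μ : Measure (PathD N d))
    (f : PathD N d → ℝ) (δ : ℝ) : EReal :=
  ⨆ π : {π : Measure (PathD N d × PathD N d) //
      IsProbabilityMeasure π ∧ IsBicausalCoupling μ (π.map Prod.snd) π ∧
      IsMartingaleMeasure (π.map Prod.snd) ∧
      Integrable (fun z => cN p z.1 z.2) π},
    ((∫ z, f z.2 ∂π.1 : ℝ) : EReal) -
      ((ENNReal.ofReal δ * L ((costD p π.1) ^ (1 / p) / δ) : ℝ≥0∞) : EReal)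

open ProbabilityTheory
open scoped NNReal Topology

/-!
For a competitor `π` with `E_π[c_N] = r ^ p`, a first order expansion gives
`E_π[f(Y)] = E_μ[f(X)] + ∑ₙ E_π[⟨𝔻ₙ f(X), ΔYₙ - ΔXₙ⟩] + o(r)`. Causality replaces `𝔻ₙ f(X)` by its
optional projection, and bicausality together with the two martingale properties makes
`ΔYₙ - ΔXₙ` orthogonal to every predictable `hₙ(X)`. By Hölder the linear term is thus at most
`inf_h ‖ᵒ𝔻f - h‖_q * r`. Taking `r = δ u`, the growth of `L` confines `u` to a bounded set, and the
supremum over `u` of `u * inf_h ‖ᵒ𝔻f - h‖_q - L u` is the conjugate.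

Conversely, the minimiser `h` exists, and its Euler–Lagrange equation says that
`φₙ = |ᵒ𝔻ₙ f - hₙ| ^ (q - 2) * (ᵒ𝔻ₙ f - hₙ)` is a martingale difference, which after normalisation
attains equality in Hölder. Approximating `φ` by martingale differences that are Lipschitz in the
last coordinate, the shift of the increments of `x` by `δ u φ(x)` is, for small `δ`, an adapted
bijection onto its image with adapted inverse, so its graph is a bicausal coupling with a martingale
measure that attains the bound to first order.
-/

section ConditionalExpectation

variable {Ω : Type*} {m m' m₁ m₂ mΩ : MeasurableSpace Ω} {π : Measure Ω}

theorem condExp_ae_eq_zero_of_setIntegral_eq_zero {a : Ω → ℝ} (hm : m ≤ mΩ)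
    [SigmaFinite (π.trim hm)] (ha : Integrable a π)
    (h : ∀ S, MeasurableSet[m] S → ∫ x in S, a x ∂π = 0) : π[a | m] =ᵐ[π] 0 :=
  (ae_eq_condExp_of_forall_setIntegral_eq hm ha
    (fun _ _ _ ↦ (integrable_zero _ _ _).integrableOn) (fun S hS _ ↦ by simp [h S hS])
    stronglyMeasurable_zero.aestronglyMeasurable).symm

theorem condExp_sub_condExp_ae_eq_zero {a : Ω → ℝ} (hm : m ≤ mΩ) [SigmaFinite (π.trim hm)]
    (ha : Integrable a π) : π[a - π[a | m] | m] =ᵐ[π] 0 := by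
  filter_upwards [condExp_sub ha integrable_condExp m] with x hx
  rw [hx, condExp_of_stronglyMeasurable hm stronglyMeasurable_condExp integrable_condExp, sub_self]

theorem integral_mul_eq_zero_of_condExp_ae_eq_zero {a c : Ω → ℝ} (hm : m ≤ mΩ)
    [SigmaFinite (π.trim hm)] (ha : Integrable a π) (ha₀ : π[a | m] =ᵐ[π] 0)
    (hc : StronglyMeasurable[m] c) (hac : Integrable (a * c) π) :
    ∫ x, a x * c x ∂π = 0 :=
  calc ∫ x, a x * c x ∂π = ∫ x, (π[a * c | m]) x ∂π := (integral_condExp hm).symm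
    _ = 0 := by
      refine integral_eq_zero_of_ae ?_
      filter_upwards [condExp_mul_of_stronglyMeasurable_right hc hac ha, ha₀] with x hx hx₀
      simp [hx, hx₀]

theorem condExp_comp_ae_eq_of_measurePreserving {Ω' : Type*} {n nΩ' : MeasurableSpace Ω'}
    {ν : Measure Ω'} [IsFiniteMeasure π] [IsFiniteMeasure ν] {T : Ω → Ω'}
    (hT : MeasurePreserving T π ν) (hn : n ≤ nΩ') {a : Ω' → ℝ} (ha : Integrable a ν) :
    π[a ∘ T | n.comap T] =ᵐ[π] ν[a | n] ∘ T := by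
  have hcomap : n.comap T ≤ mΩ := (MeasurableSpace.comap_mono hn).trans hT.measurable.comap_le
  have hint : Integrable (ν[a | n] ∘ T) π := hT.integrable_comp_of_integrable integrable_condExp
  refine (ae_eq_condExp_of_forall_setIntegral_eq hcomap (hT.integrable_comp_of_integrable ha)
    (fun _ _ _ ↦ hint.integrableOn) ?_ ?_).symm
  · rintro _ ⟨S, hS, rfl⟩ -
    have key (g : Ω' → ℝ) (hg : Integrable g ν) :
        ∫ x in T ⁻¹' S, (g ∘ T) x ∂π = ∫ y in S, g y ∂ν := by
      rw [← hT.map_eq, setIntegral_map (hn S hS) (hT.map_eq ▸ hg.1) hT.aemeasurable]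
      rfl
    rw [key _ integrable_condExp, key _ ha, setIntegral_condExp hn ha hS]
  · exact (stronglyMeasurable_condExp.comp_measurable
      (comap_measurable T)).aestronglyMeasurable

namespace CondIndepOn

theorem condExp_indicator_sub_ae_eq_zero [IsFiniteMeasure π] (h : CondIndepOn π m' m₁ m₂)
    (hm' : m' ≤ mΩ) (hm₁ : m₁ ≤ mΩ) (hm₂ : m₂ ≤ mΩ) {A : Set Ω} (hA : MeasurableSet[m₁] A) :
    π[A.indicator (fun _ ↦ (1 : ℝ)) - π[A.indicator (fun _ ↦ (1 : ℝ)) | m'] | m₂] =ᵐ[π] 0 := by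
  have hind {S : Set Ω} (hS : MeasurableSet S) : Integrable (S.indicator fun _ ↦ (1 : ℝ)) π :=
    (integrable_const 1).indicator hS
  set c := π[A.indicator (fun _ ↦ (1 : ℝ)) | m']
  have hci : Integrable c π := integrable_condExp
  refine condExp_ae_eq_zero_of_setIntegral_eq_zero hm₂ ((hind (hm₁ A hA)).sub hci)
    fun B hB ↦ ?_
  have hcB : c * B.indicator (fun _ ↦ (1 : ℝ)) = B.indicator c := by
    ext x; by_cases hx : x ∈ B <;> simp [hx]
  have hpull : π[B.indicator c | m'] =ᵐ[π] c * π[B.indicator (fun _ ↦ (1 : ℝ)) | m'] := by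
    rw [← hcB]
    exact condExp_mul_of_stronglyMeasurable_left stronglyMeasurable_condExp
      (hcB ▸ hci.indicator (hm₂ B hB)) (hind (hm₂ B hB))
  calc ∫ x in B, (A.indicator (fun _ ↦ (1 : ℝ)) - c) x ∂π
      = ∫ x, (A ∩ B).indicator (fun _ ↦ (1 : ℝ)) x ∂π - ∫ x, B.indicator c x ∂π := by
        rw [integral_sub' (hind (hm₁ A hA)).integrableOn hci.integrableOn,
          ← integral_indicator (hm₂ B hB), ← integral_indicator (hm₂ B hB),
          Set.indicator_indicator, Set.inter_comm]
    _ = 0 := by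
        rw [← integral_condExp hm', ← integral_condExp hm' (f := B.indicator c), sub_eq_zero]
        exact integral_congr_ae ((h A B hA hB).trans hpull.symm)

theorem condExp_ae_eq_zero [IsFiniteMeasure π] (h : CondIndepOn π m' m₁ m₂)
    (hm' : m' ≤ mΩ) (hm₁ : m₁ ≤ mΩ) (hm₂ : m₂ ≤ mΩ) {a : Ω → ℝ} (ha : Integrable a π)
    (ham : StronglyMeasurable[m₂] a) (ha₀ : π[a | m'] =ᵐ[π] 0) : π[a | m₁] =ᵐ[π] 0 := by
  refine condExp_ae_eq_zero_of_setIntegral_eq_zero hm₁ ha fun A hA ↦ ?_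
  set c := π[A.indicator (fun _ ↦ (1 : ℝ)) | m']
  have hAi : Integrable (A.indicator fun _ ↦ (1 : ℝ)) π :=
    (integrable_const 1).indicator (hm₁ A hA)
  have hAle (x : Ω) : |A.indicator (fun _ ↦ (1 : ℝ)) x| ≤ 1 := by
    by_cases hx : x ∈ A <;> simp [hx]
  have hac : Integrable (a * c) π := ha.mul_bdd (c := 1) integrable_condExp.1
    (ae_bdd_abs_condExp_of_ae_bdd_abs (R := 1) (ae_of_all _ hAle))
  have haA : Integrable (a * A.indicator fun _ ↦ (1 : ℝ)) π :=
    ha.mul_bdd (c := 1) hAi.1 (ae_of_all _ hAle)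
  have hdecomp : A.indicator a
      = (A.indicator (fun _ ↦ (1 : ℝ)) - c) * a + a * c := by
    ext x; by_cases hx : x ∈ A <;> simp [hx] <;> ring
  have hfirst : Integrable ((A.indicator (fun _ ↦ (1 : ℝ)) - c) * a) π := by
    simpa only [mul_sub, mul_comm] using haA.sub hac
  rw [← integral_indicator (hm₁ A hA), hdecomp, integral_add' hfirst hac]
  simp only [Pi.mul_apply]
  rw [integral_mul_eq_zero_of_condExp_ae_eq_zero hm₂ (hAi.sub integrable_condExp)
      (h.condExp_indicator_sub_ae_eq_zero hm' hm₁ hm₂ hA) ham hfirst,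
    integral_mul_eq_zero_of_condExp_ae_eq_zero hm' ha ha₀ stronglyMeasurable_condExp hac,
    add_zero]

theorem of_forall_exists_ae_eq [IsFiniteMeasure π] (hm' : m' ≤ mΩ) (hm₂ : m₂ ≤ mΩ)
    (h : ∀ A, MeasurableSet[m₁] A → ∃ A', MeasurableSet[m'] A' ∧ A =ᵐ[π] A') :
    CondIndepOn π m' m₁ m₂ := by
  intro A B hA hB
  obtain ⟨A', hA', hAA'⟩ := h A hA
  have hind {S : Set Ω} (hS : MeasurableSet S) : Integrable (S.indicator fun _ ↦ (1 : ℝ)) π :=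
    (integrable_const 1).indicator hS
  have hA'm : StronglyMeasurable[m'] (A'.indicator fun _ ↦ (1 : ℝ)) :=
    stronglyMeasurable_const.indicator hA'
  have hmul : (A' ∩ B).indicator (fun _ ↦ (1 : ℝ))
      = A'.indicator (fun _ ↦ (1 : ℝ)) * B.indicator fun _ ↦ (1 : ℝ) :=
    Set.inter_indicator_one
  have hcondA : π[A.indicator (fun _ ↦ (1 : ℝ)) | m'] =ᵐ[π] A'.indicator fun _ ↦ (1 : ℝ) :=
    (condExp_congr_ae (indicator_ae_eq_of_ae_eq_set hAA')).trans
      (condExp_of_stronglyMeasurable hm' hA'm (hind (hm' A' hA'))).eventuallyEq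
  calc π[(A ∩ B).indicator (fun _ ↦ (1 : ℝ)) | m']
      =ᵐ[π] π[A'.indicator (fun _ ↦ (1 : ℝ)) * B.indicator (fun _ ↦ (1 : ℝ)) | m'] := by
        rw [← hmul]
        exact condExp_congr_ae (indicator_ae_eq_of_ae_eq_set (hAA'.inter (EventuallyEq.refl _ _)))
    _ =ᵐ[π] A'.indicator (fun _ ↦ (1 : ℝ)) * π[B.indicator (fun _ ↦ (1 : ℝ)) | m'] :=
        condExp_mul_of_stronglyMeasurable_left hA'm
          (hmul ▸ hind ((hm' A' hA').inter (hm₂ B hB))) (hind (hm₂ B hB))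
    _ =ᵐ[π] _ := hcondA.symm.mul (EventuallyEq.refl _ _)

end CondIndepOn

end ConditionalExpectation

section RealPowers

theorem add_rpow_le_two_rpow_mul {a b e : ℝ} (ha : 0 ≤ a) (hb : 0 ≤ b) (he : 0 ≤ e) :
    (a + b) ^ e ≤ 2 ^ e * (a ^ e + b ^ e) :=
  calc (a + b) ^ e ≤ (2 * max a b) ^ e :=
        Real.rpow_le_rpow (by positivity) (by linarith [le_max_left a b, le_max_right a b]) he
    _ = 2 ^ e * max a b ^ e := Real.mul_rpow (by norm_num) (le_max_of_le_left ha)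
    _ ≤ 2 ^ e * (a ^ e + b ^ e) := by
        gcongr
        rcases max_cases a b with ⟨h, -⟩ | ⟨h, -⟩ <;> rw [h]
        · exact le_add_of_nonneg_right (Real.rpow_nonneg hb e)
        · exact le_add_of_nonneg_left (Real.rpow_nonneg ha e)

variable {Ω : Type*} {mΩ : MeasurableSpace Ω} {μ : Measure Ω} {a b : Ω → ℝ}

theorem memLp_ofReal_iff_integrable_abs_rpow {r : ℝ} (hr : 0 < r)
    (ha : AEStronglyMeasurable a μ) :
    MemLp a (ENNReal.ofReal r) μ ↔ Integrable (fun x ↦ |a x| ^ r) μ := by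
  rw [← integrable_norm_rpow_iff ha (by simpa using hr) ENNReal.ofReal_ne_top,
    ENNReal.toReal_ofReal hr.le]
  rfl

theorem integrable_abs_rpow_of_memLp_ofReal {r : ℝ} (hr : 0 < r)
    (ha : MemLp a (ENNReal.ofReal r) μ) : Integrable (fun x ↦ |a x| ^ r) μ :=
  (memLp_ofReal_iff_integrable_abs_rpow hr ha.1).1 ha

theorem integrable_of_memLp_ofReal [IsFiniteMeasure μ] {r : ℝ} (hr : 1 ≤ r)
    (ha : MemLp a (ENNReal.ofReal r) μ) : Integrable a μ :=
  ha.integrable (by simpa using ENNReal.ofReal_le_ofReal hr)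

theorem integrable_mul_of_memLp_ofReal {p q : ℝ} (hpq : p.HolderConjugate q)
    (ha : MemLp a (ENNReal.ofReal p) μ) (hb : MemLp b (ENNReal.ofReal q) μ) :
    Integrable (fun x ↦ a x * b x) μ :=
  have := hpq.ennrealOfReal
  ha.integrable_mul hb

theorem sum_integral_abs_mul_le {ι : Type*} [Fintype ι] {p q : ℝ} (hpq : p.HolderConjugate q)
    {a b : ι → Ω → ℝ} (ha : ∀ s, MemLp (a s) (ENNReal.ofReal p) μ)
    (hb : ∀ s, MemLp (b s) (ENNReal.ofReal q) μ) :
    ∑ s, ∫ x, |a s x * b s x| ∂μ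
      ≤ (∑ s, ∫ x, |a s x| ^ p ∂μ) ^ (1 / p) * (∑ s, ∫ x, |b s x| ^ q ∂μ) ^ (1 / q) := by
  have hroot {e : ℝ} (he : e ≠ 0) {I : ℝ} (hI : 0 ≤ I) : |I ^ (1 / e)| ^ e = I := by
    rw [abs_of_nonneg (by positivity), ← Real.rpow_mul hI, one_div_mul_cancel he, Real.rpow_one]
  have hnonneg (c : Ω → ℝ) (e : ℝ) : 0 ≤ ∫ x, |c x| ^ e ∂μ :=
    integral_nonneg fun x ↦ by positivity
  calc ∑ s, ∫ x, |a s x * b s x| ∂μ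
      ≤ ∑ s, (∫ x, |a s x| ^ p ∂μ) ^ (1 / p) * (∫ x, |b s x| ^ q ∂μ) ^ (1 / q) := by
        gcongr with s
        simpa [abs_mul] using integral_mul_norm_le_Lp_mul_Lq hpq (ha s) (hb s)
    _ ≤ _ := by
        simpa only [hroot hpq.ne_zero (hnonneg _ _), hroot hpq.symm.ne_zero (hnonneg _ _)]
          using Real.inner_le_Lp_mul_Lq Finset.univ
            (fun s ↦ (∫ x, |a s x| ^ p ∂μ) ^ (1 / p)) (fun s ↦ (∫ x, |b s x| ^ q ∂μ) ^ (1 / q)) hpq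

theorem sum_integral_mul_le {ι : Type*} [Fintype ι] {p q : ℝ} (hpq : p.HolderConjugate q)
    {a b : ι → Ω → ℝ} (ha : ∀ s, MemLp (a s) (ENNReal.ofReal p) μ)
    (hb : ∀ s, MemLp (b s) (ENNReal.ofReal q) μ) :
    |∑ s, ∫ x, a s x * b s x ∂μ|
      ≤ (∑ s, ∫ x, |a s x| ^ p ∂μ) ^ (1 / p) * (∑ s, ∫ x, |b s x| ^ q ∂μ) ^ (1 / q) :=
  (Finset.abs_sum_le_sum_abs _ _).trans
    ((Finset.sum_le_sum fun _ _ ↦ abs_integral_le_integral_abs).trans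
      (sum_integral_abs_mul_le hpq ha hb))

theorem tendsto_integral_abs_rpow_of_tendsto_eLpNorm {r : ℝ} (hr : 1 ≤ r) {u : ℕ → Ω → ℝ}
    (hu : ∀ k, MemLp (u k) (ENNReal.ofReal r) μ) (ha : MemLp a (ENNReal.ofReal r) μ)
    (h : Tendsto (fun k ↦ eLpNorm (u k - a) (ENNReal.ofReal r) μ) atTop (𝓝 0)) :
    Tendsto (fun k ↦ ∫ x, |u k x| ^ r ∂μ) atTop (𝓝 (∫ x, |a x| ^ r ∂μ)) := by
  have hr₀ : 0 < r := zero_lt_one.trans_le hr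
  have : Fact (1 ≤ ENNReal.ofReal r) := ⟨ENNReal.one_le_ofReal.2 hr⟩
  have hnorm {c : Ω → ℝ} (hc : MemLp c (ENNReal.ofReal r) μ) :
      ‖hc.toLp c‖ ^ r = ∫ x, |c x| ^ r ∂μ := by
    have hI : 0 ≤ ∫ x, |c x| ^ r ∂μ := by positivity
    rw [Lp.norm_toLp, hc.eLpNorm_eq_integral_rpow_norm (by simpa using hr₀) ENNReal.ofReal_ne_top,
      ENNReal.toReal_ofReal (by positivity), ENNReal.toReal_ofReal hr₀.le]
    exact Real.rpow_inv_rpow hI hr₀.ne'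
  have hlim := ((Lp.tendsto_Lp_iff_tendsto_eLpNorm'' u hu a ha).2 h).norm.rpow_const
    (.inr hr₀.le : _ ∨ 0 ≤ r)
  simpa only [hnorm] using hlim

theorem tendsto_integral_mul_of_tendsto_eLpNorm {p q : ℝ} (hpq : p.HolderConjugate q)
    {u : ℕ → Ω → ℝ} (hu : ∀ k, MemLp (u k) (ENNReal.ofReal p) μ)
    (ha : MemLp a (ENNReal.ofReal p) μ) (hb : MemLp b (ENNReal.ofReal q) μ)
    (h : Tendsto (fun k ↦ eLpNorm (u k - a) (ENNReal.ofReal p) μ) atTop (𝓝 0)) :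
    Tendsto (fun k ↦ ∫ x, b x * u k x ∂μ) atTop (𝓝 (∫ x, b x * a x ∂μ)) := by
  have := hpq.symm.ennrealOfReal
  refine tendsto_integral_of_L1' (fun x ↦ b x * a x)
    (integrable_mul_of_memLp_ofReal hpq.symm hb ha).1
    (.of_forall fun k ↦ integrable_mul_of_memLp_ofReal hpq.symm hb (hu k)) ?_
  have hmul : Tendsto (fun k ↦ eLpNorm b (ENNReal.ofReal q) μ *
      eLpNorm (u k - a) (ENNReal.ofReal p) μ) atTop (𝓝 0) := by
    simpa using ENNReal.Tendsto.const_mul h (.inr hb.2.ne)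
  refine tendsto_of_tendsto_of_tendsto_of_le_of_le tendsto_const_nhds hmul
    (fun _ ↦ zero_le) fun k ↦ ?_
  have hdiff : (fun x ↦ b x * u k x) - (fun x ↦ b x * a x) = b • (u k - a) := by
    funext x
    simp [mul_sub]
  simp only [hdiff]
  exact eLpNorm_smul_le_mul_eLpNorm ((hu k).sub ha).1 hb.1

end RealPowers

section SignedPower

/-- The odd power `sign t * |t| ^ r`, which is `(r + 1)⁻¹` times the derivative of
`|t| ^ (r + 1)`. -/
def signedPow (r t : ℝ) : ℝ := max t 0 ^ r - max (-t) 0 ^ r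

theorem signedPow_neg (r t : ℝ) : signedPow r (-t) = -signedPow r t := by
  simp [signedPow]

variable {r : ℝ}

theorem signedPow_of_nonneg (hr : 0 < r) {t : ℝ} (ht : 0 ≤ t) : signedPow r t = t ^ r := by
  simp [signedPow, ht, Real.zero_rpow hr.ne']

theorem signedPow_of_nonpos (hr : 0 < r) {t : ℝ} (ht : t ≤ 0) : signedPow r t = -(-t) ^ r := by
  rw [← signedPow_of_nonneg hr (neg_nonneg.2 ht), signedPow_neg, neg_neg]

theorem abs_signedPow (hr : 0 < r) (t : ℝ) : |signedPow r t| = |t| ^ r := by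
  rcases le_total 0 t with ht | ht
  · rw [signedPow_of_nonneg hr ht, abs_of_nonneg ht, abs_of_nonneg (Real.rpow_nonneg ht _)]
  · rw [signedPow_of_nonpos hr ht, abs_of_nonpos ht, abs_neg,
      abs_of_nonneg (Real.rpow_nonneg (neg_nonneg.2 ht) _)]

theorem signedPow_mul_of_nonneg (r : ℝ) {a : ℝ} (ha : 0 ≤ a) (t : ℝ) :
    signedPow r (a * t) = a ^ r * signedPow r t := by
  have hmax (u : ℝ) : max (a * u) 0 ^ r = a ^ r * max u 0 ^ r := by
    rw [← Real.mul_rpow ha (le_max_right u 0), mul_max_of_nonneg _ _ ha, mul_zero]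
  rw [signedPow, signedPow, ← mul_neg, hmax, hmax, mul_sub]

theorem mul_signedPow (hr : 0 < r) (t : ℝ) : t * signedPow r t = |t| ^ (r + 1) := by
  rcases le_total 0 t with ht | ht
  · rw [signedPow_of_nonneg hr ht, abs_of_nonneg ht, Real.rpow_add_one' ht (by positivity),
      mul_comm]
  · rw [signedPow_of_nonpos hr ht, abs_of_nonpos ht,
      Real.rpow_add_one' (neg_nonneg.2 ht) (by positivity)]
    ring

theorem continuous_signedPow (hr : 0 < r) : Continuous (signedPow r) :=
  ((continuous_id.max continuous_const).rpow_const fun _ ↦ Or.inr hr.le).sub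
    ((continuous_neg.max continuous_const).rpow_const fun _ ↦ Or.inr hr.le)

theorem strictMono_signedPow (hr : 0 < r) : StrictMono (signedPow r) := by
  have hpos {s t : ℝ} (ht : 0 < t) (hst : s < t) : signedPow r s < signedPow r t := by
    rw [signedPow_of_nonneg hr ht.le]
    calc signedPow r s ≤ max s 0 ^ r :=
          sub_le_self _ (Real.rpow_nonneg (le_max_right _ _) r)
      _ < t ^ r := Real.rpow_lt_rpow (le_max_right _ _) (max_lt hst ht) hr
  intro s t hst
  rcases lt_or_ge 0 t with ht | ht
  · exact hpos ht hst
  · simpa only [signedPow_neg, neg_lt_neg_iff]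
      using hpos (neg_pos.2 (hst.trans_le ht)) (neg_lt_neg hst)

-- The tangent line of the convex function `|·| ^ (r + 1)` at `u`, obtained from Young's inequality.
theorem abs_rpow_add_mul_signedPow_le (hr : 0 < r) (u v : ℝ) :
    |u| ^ (r + 1) + (r + 1) * (v * signedPow r u) ≤ |u + v| ^ (r + 1) := by
  have hconj : (r + 1).HolderConjugate ((r + 1) / r) :=
    (Real.holderConjugate_iff_eq_conjExponent (by linarith)).2 (by simp)
  have hyoung : (u + v) * signedPow r u
      ≤ |u + v| ^ (r + 1) / (r + 1) + |u| ^ (r + 1) / ((r + 1) / r) := by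
    have h := Real.young_inequality (u + v) (signedPow r u) hconj
    rwa [abs_signedPow hr, ← Real.rpow_mul (abs_nonneg u), mul_div_cancel₀ _ hr.ne'] at h
  rw [add_mul, mul_signedPow hr] at hyoung
  have h := mul_le_mul_of_nonneg_left hyoung (by linarith : 0 ≤ r + 1)
  field_simp at h
  linarith

end SignedPower

section SignedCenter

variable {κ : Measure ℝ} {r : ℝ}

/-- The real number `c` minimising `∫ |y - c| ^ (r + 1) ∂κ`, characterised by the first order
condition `∫ signedPow r (y - c) ∂κ = 0`. It is `0` when `|y| ^ r` is not integrable, since all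
integrals are then `0` by convention and `sInf univ = 0`. -/
def signedCenter (r : ℝ) (κ : Measure ℝ) : ℝ := sInf {c | ∫ y, signedPow r (y - c) ∂κ ≤ 0}

theorem memLp_id_of_integrable_abs_rpow (hr : 0 < r) (h : Integrable (fun y : ℝ ↦ |y| ^ r) κ) :
    MemLp (fun y : ℝ ↦ y) (ENNReal.ofReal r) κ :=
  (memLp_ofReal_iff_integrable_abs_rpow hr measurable_id.aestronglyMeasurable).2 h

theorem integrable_signedPow_sub [IsFiniteMeasure κ] (hr : 0 < r)
    (h : Integrable (fun y : ℝ ↦ |y| ^ r) κ) (c : ℝ) :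
    Integrable (fun y ↦ signedPow r (y - c)) κ := by
  refine (integrable_abs_rpow_of_memLp_ofReal hr
    ((memLp_id_of_integrable_abs_rpow hr h).sub (memLp_const c))).mono'
    ((continuous_signedPow hr).comp (continuous_sub_right c)).aestronglyMeasurable
    (ae_of_all _ fun y ↦ (abs_signedPow hr _).le)

theorem integrable_abs_rpow_of_integrable_signedPow_sub [IsFiniteMeasure κ] (hr : 0 < r) {c : ℝ}
    (h : Integrable (fun y ↦ signedPow r (y - c)) κ) : Integrable (fun y : ℝ ↦ |y| ^ r) κ := by
  have hsub : MemLp (fun y ↦ y - c) (ENNReal.ofReal r) κ := by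
    rw [memLp_ofReal_iff_integrable_abs_rpow hr (by fun_prop)]
    simpa only [abs_signedPow hr] using h.abs
  refine integrable_abs_rpow_of_memLp_ofReal hr ?_
  convert hsub.add (memLp_const c) using 1
  ext y; simp

theorem continuous_integral_signedPow_mul_sub [IsFiniteMeasure κ] (hr : 0 < r)
    (h : Integrable (fun y : ℝ ↦ |y| ^ r) κ) :
    Continuous fun e : ℝ × ℝ ↦ ∫ y, signedPow r (e.1 * y - e.2) ∂κ := by
  rw [continuous_iff_continuousAt]
  rintro ⟨a, b⟩
  refine continuousAt_of_dominated (bound := fun y ↦ ((|a| + 1) * |y| + (|b| + 1)) ^ r)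
    (.of_forall fun e ↦ ((continuous_signedPow hr).comp (by fun_prop)).aestronglyMeasurable)
    ?_ ?_ (ae_of_all _ fun y ↦ ((continuous_signedPow hr).comp (by fun_prop)).continuousAt)
  · have hnhds : ∀ᶠ e : ℝ × ℝ in 𝓝 (a, b), |e.1| < |a| + 1 ∧ |e.2| < |b| + 1 :=
      ((continuous_fst.abs).continuousAt.eventually_lt_const (by simp)).and
        ((continuous_snd.abs).continuousAt.eventually_lt_const (by simp))
    filter_upwards [hnhds] with e he
    refine ae_of_all _ fun y ↦ ?_
    rw [Real.norm_eq_abs, abs_signedPow hr]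
    refine Real.rpow_le_rpow (abs_nonneg _) ((abs_sub _ _).trans ?_) hr.le
    rw [abs_mul]
    gcongr
    exacts [he.1.le, he.2.le]
  · have hmem : MemLp (fun y : ℝ ↦ (|a| + 1) * |y| + (|b| + 1)) (ENNReal.ofReal r) κ :=
      ((memLp_id_of_integrable_abs_rpow hr h).abs.const_mul _).add (memLp_const _)
    refine (integrable_abs_rpow_of_memLp_ofReal hr hmem).congr (ae_of_all _ fun y ↦ ?_)
    simp only [abs_of_nonneg (show 0 ≤ (|a| + 1) * |y| + (|b| + 1) by positivity)]

theorem continuous_integral_signedPow_sub [IsFiniteMeasure κ] (hr : 0 < r)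
    (h : Integrable (fun y : ℝ ↦ |y| ^ r) κ) :
    Continuous fun c ↦ ∫ y, signedPow r (y - c) ∂κ := by
  simpa [Function.comp_def]
    using (continuous_integral_signedPow_mul_sub hr h).comp (Continuous.prodMk_right (1 : ℝ))

theorem strictAnti_integral_signedPow_sub [IsProbabilityMeasure κ] (hr : 0 < r)
    (h : Integrable (fun y : ℝ ↦ |y| ^ r) κ) :
    StrictAnti fun c ↦ ∫ y, signedPow r (y - c) ∂κ := by
  intro c c' hcc'
  have hpos (y : ℝ) : 0 < signedPow r (y - c) - signedPow r (y - c') :=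
    sub_pos.2 (strictMono_signedPow hr (by linarith))
  have hint (e : ℝ) := integrable_signedPow_sub hr h e
  rw [← sub_pos, ← integral_sub (hint c) (hint c'),
    integral_pos_iff_support_of_nonneg (fun y ↦ (hpos y).le) ((hint c).sub (hint c')),
    Function.support_eq_univ fun y ↦ (hpos y).ne']
  simp

-- After rescaling by `ε`, the integral at `c = ε⁻¹` becomes `∫ signedPow r (ε * y - 1) ∂κ`, which
-- tends to `-1` as `ε → 0`.
theorem exists_integral_signedPow_sub_eq_zero [IsProbabilityMeasure κ] (hr : 0 < r)
    (h : Integrable (fun y : ℝ ↦ |y| ^ r) κ) : ∃ c, ∫ y, signedPow r (y - c) ∂κ = 0 := by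
  have hlim : ContinuousAt (fun ε ↦ ∫ y, signedPow r (ε * y - 1) ∂κ) 0 :=
    ((continuous_integral_signedPow_mul_sub hr h).comp
      (Continuous.prodMk_left (1 : ℝ))).continuousAt
  have hzero : ∫ y : ℝ, signedPow r (0 * y - 1) ∂κ < 0 := by
    simp [signedPow_neg, signedPow_of_nonneg hr zero_le_one]
  obtain ⟨ρ, hρ, hneg⟩ := Metric.eventually_nhds_iff.1 (hlim.eventually_lt_const hzero)
  have hscale (c y : ℝ) : signedPow r (y - c / (ρ / 2))
      = (ρ / 2)⁻¹ ^ r * signedPow r (ρ / 2 * y - c) := by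
    rw [← signedPow_mul_of_nonneg r (by positivity)]
    congr 1
    field_simp
  have hupper : ∫ y, signedPow r (y - 1 / (ρ / 2)) ∂κ ≤ 0 := by
    simp only [hscale, integral_const_mul]
    exact mul_nonpos_of_nonneg_of_nonpos (by positivity)
      (hneg (by simp [abs_of_pos hρ, hρ])).le
  have hlower : 0 ≤ ∫ y, signedPow r (y - -1 / (ρ / 2)) ∂κ := by
    have hodd (y : ℝ) : signedPow r (ρ / 2 * y - -1) = -signedPow r (-(ρ / 2) * y - 1) := by
      rw [← signedPow_neg]; congr 1; ring
    simp only [hscale, integral_const_mul, hodd, integral_neg]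
    exact mul_nonneg (by positivity)
      (neg_nonneg.2 (hneg (by simp [abs_of_pos hρ, hρ])).le)
  obtain ⟨c, -, hc⟩ := isPreconnected_univ.intermediate_value (mem_univ _) (mem_univ _)
    (continuous_integral_signedPow_sub hr h).continuousOn ⟨hupper, hlower⟩
  exact ⟨c, hc⟩

theorem setOf_integral_signedPow_sub_nonpos [IsProbabilityMeasure κ] (hr : 0 < r)
    (h : Integrable (fun y : ℝ ↦ |y| ^ r) κ) {c : ℝ} (hc : ∫ y, signedPow r (y - c) ∂κ = 0) :
    {c' | ∫ y, signedPow r (y - c') ∂κ ≤ 0} = Ici c := by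
  ext c'
  rw [mem_ofPred_eq, ← hc]
  exact (strictAnti_integral_signedPow_sub hr h).le_iff_ge

theorem integral_signedPow_sub_signedCenter [IsProbabilityMeasure κ] (hr : 0 < r)
    (h : Integrable (fun y : ℝ ↦ |y| ^ r) κ) :
    ∫ y, signedPow r (y - signedCenter r κ) ∂κ = 0 := by
  obtain ⟨c, hc⟩ := exists_integral_signedPow_sub_eq_zero hr h
  rwa [signedCenter, setOf_integral_signedPow_sub_nonpos hr h hc, csInf_Ici]

theorem signedCenter_le_iff [IsProbabilityMeasure κ] (hr : 0 < r)
    (h : Integrable (fun y : ℝ ↦ |y| ^ r) κ) {c : ℝ} :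
    signedCenter r κ ≤ c ↔ ∫ y, signedPow r (y - c) ∂κ ≤ 0 := by
  obtain ⟨c₀, hc₀⟩ := exists_integral_signedPow_sub_eq_zero hr h
  have hset := setOf_integral_signedPow_sub_nonpos hr h hc₀
  rw [signedCenter, hset, csInf_Ici, ← mem_Ici, ← hset, mem_ofPred_eq]

theorem signedCenter_of_not_integrable [IsFiniteMeasure κ] (hr : 0 < r)
    (h : ¬ Integrable (fun y : ℝ ↦ |y| ^ r) κ) : signedCenter r κ = 0 := by
  have hundef (c : ℝ) : ∫ y, signedPow r (y - c) ∂κ = 0 :=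
    integral_undef (mt (integrable_abs_rpow_of_integrable_signedPow_sub hr) h)
  simp [signedCenter, hundef, show {_c : ℝ | True} = univ from rfl]

theorem abs_signedCenter_rpow_le [IsProbabilityMeasure κ] (hr : 0 < r)
    (h : Integrable (fun y : ℝ ↦ |y| ^ (r + 1)) κ) :
    |signedCenter r κ| ^ (r + 1) ≤ 2 ^ (r + 2) * ∫ y, |y| ^ (r + 1) ∂κ := by
  have hr1 : 0 < r + 1 := by positivity
  set c := signedCenter r κ
  have hmem := memLp_id_of_integrable_abs_rpow hr1 h
  have hr_int : Integrable (fun y : ℝ ↦ |y| ^ r) κ := integrable_abs_rpow_of_memLp_ofReal hr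
    (hmem.mono_exponent (ENNReal.ofReal_le_ofReal (by linarith)))
  have hsub : Integrable (fun y : ℝ ↦ |y - c| ^ (r + 1)) κ :=
    integrable_abs_rpow_of_memLp_ofReal hr1 (hmem.sub (memLp_const c))
  have hsigned : Integrable (fun y ↦ (r + 1) * (c * signedPow r (y - c))) κ :=
    ((integrable_signedPow_sub hr hr_int c).const_mul c).const_mul (r + 1)
  have hmin : ∫ y, |y - c| ^ (r + 1) ∂κ ≤ ∫ y, |y| ^ (r + 1) ∂κ :=
    calc ∫ y, |y - c| ^ (r + 1) ∂κ
        = ∫ y, (|y - c| ^ (r + 1) + (r + 1) * (c * signedPow r (y - c))) ∂κ := by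
          rw [integral_add hsub hsigned, integral_const_mul, integral_const_mul,
            integral_signedPow_sub_signedCenter hr hr_int, mul_zero, mul_zero, add_zero]
      _ ≤ ∫ y, |y| ^ (r + 1) ∂κ := integral_mono (hsub.add hsigned) h fun y ↦ by
          simpa using abs_rpow_add_mul_signedPow_le hr (y - c) c
  calc |c| ^ (r + 1) = ∫ _, |c| ^ (r + 1) ∂κ := by simp
    _ ≤ ∫ y, 2 ^ (r + 1) * (|y| ^ (r + 1) + |y - c| ^ (r + 1)) ∂κ := by
        refine integral_mono (integrable_const _) ((h.add hsub).const_mul _) fun y ↦ ?_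
        refine le_trans (Real.rpow_le_rpow (abs_nonneg c) ?_ hr1.le)
          (add_rpow_le_two_rpow_mul (abs_nonneg _) (abs_nonneg _) hr1.le)
        simpa using abs_sub y (y - c)
    _ = 2 ^ (r + 1) * (∫ y, |y| ^ (r + 1) ∂κ + ∫ y, |y - c| ^ (r + 1) ∂κ) := by
        rw [integral_const_mul, integral_add h hsub]
    _ ≤ 2 ^ (r + 1) * (∫ y, |y| ^ (r + 1) ∂κ + ∫ y, |y| ^ (r + 1) ∂κ) := by gcongr
    _ = 2 ^ (r + 2) * ∫ y, |y| ^ (r + 1) ∂κ := by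
        rw [show r + 2 = r + 1 + 1 by ring, Real.rpow_add_one two_ne_zero (r + 1)]; ring

end SignedCenter

section ConditionalCenter

theorem measurable_signedCenter_kernel {β : Type*} {mβ : MeasurableSpace β} {r : ℝ} (hr : 0 < r)
    (κ : Kernel β ℝ) [IsMarkovKernel κ] : Measurable fun b ↦ signedCenter r (κ b) := by
  have hgood : MeasurableSet {b | Integrable (fun y : ℝ ↦ |y| ^ r) (κ b)} :=
    measurableSet_integrable
      (Measurable.pow_const measurable_norm r).stronglyMeasurable
  refine measurable_of_Iic fun c ↦ ?_
  have hint : Measurable fun b ↦ ∫ y, signedPow r (y - c) ∂κ b :=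
    ((continuous_signedPow hr).comp
      (continuous_sub_right c)).stronglyMeasurable.integral_kernel.measurable
  have hset : (fun b ↦ signedCenter r (κ b)) ⁻¹' Iic c
      = {b | Integrable (fun y : ℝ ↦ |y| ^ r) (κ b)} ∩ {b | ∫ y, signedPow r (y - c) ∂κ b ≤ 0}
        ∪ {b | Integrable (fun y : ℝ ↦ |y| ^ r) (κ b)}ᶜ ∩ {_b | 0 ≤ c} := by
    ext b
    by_cases hb : Integrable (fun y : ℝ ↦ |y| ^ r) (κ b)
    · simp [hb, signedCenter_le_iff hr hb]
    · simp [hb, signedCenter_of_not_integrable hr hb]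
  rw [hset]
  exact (hgood.inter (measurableSet_le hint measurable_const)).union
    (hgood.compl.inter (MeasurableSet.const _))

variable {Ω β : Type*} {mΩ : MeasurableSpace Ω} [mβ : MeasurableSpace β] {μ : Measure Ω}
  [IsFiniteMeasure μ] {T : Ω → β} {g : Ω → ℝ} {r : ℝ}

/-- The conditional `L^(r+1)`-centre of `g` given `T`: the function of `T` closest to `g` in
`L^(r+1)`, which for `r = 1` is the conditional expectation of `g`. -/
def condSignedCenter (r : ℝ) (g : Ω → ℝ) (T : Ω → β) (μ : Measure Ω) [IsFiniteMeasure μ] : Ω → ℝ :=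
  fun x ↦ signedCenter r (condDistrib g T μ (T x))

theorem measurable_condSignedCenter (hr : 0 < r) :
    Measurable[mβ.comap T] (condSignedCenter r g T μ) :=
  (measurable_signedCenter_kernel hr _).comp (comap_measurable T)

theorem memLp_condSignedCenter (hr : 0 < r) (hT : Measurable T)
    (hg : MemLp g (ENNReal.ofReal (r + 1)) μ) :
    MemLp (condSignedCenter r g T μ) (ENNReal.ofReal (r + 1)) μ := by
  have hr1 : 0 < r + 1 := by positivity
  have hmeas : AEStronglyMeasurable (condSignedCenter r g T μ) μ :=
    ((measurable_condSignedCenter hr).mono hT.comap_le le_rfl).aestronglyMeasurable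
  have hpow : StronglyMeasurable fun y : ℝ ↦ |y| ^ (r + 1) :=
    (Measurable.pow_const measurable_norm (r + 1)).stronglyMeasurable
  have hgint : Integrable (fun x ↦ |g x| ^ (r + 1)) μ :=
    integrable_abs_rpow_of_memLp_ofReal hr1 hg
  have hgT := hg.1.aemeasurable
  have hgood : ∀ᵐ x ∂μ, Integrable (fun y : ℝ ↦ |y| ^ (r + 1)) (condDistrib g T μ (T x)) :=
    Integrable.condDistrib_ae (f := fun z : β × ℝ ↦ |z.2| ^ (r + 1)) hT.aemeasurable hgT
      ((integrable_map_measure (hpow.comp_measurable measurable_snd).aestronglyMeasurable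
        (hT.aemeasurable.prodMk hgT)).2 hgint)
  rw [memLp_ofReal_iff_integrable_abs_rpow hr1 hmeas]
  refine ((integrable_condExp (m := mβ.comap T) (f := fun x ↦ |g x| ^ (r + 1))).const_mul
    (2 ^ (r + 2))).mono'
      (hmeas.norm.aemeasurable.pow_const (r + 1)).aestronglyMeasurable ?_
  filter_upwards [hgood, condExp_ae_eq_integral_condDistrib hT hgT hpow hgint] with x hx hcond
  rw [hcond, Real.norm_eq_abs, abs_of_nonneg (by positivity)]
  exact abs_signedCenter_rpow_le hr hx

theorem memLp_sub_condSignedCenter (hr : 0 < r) (hT : Measurable T)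
    (hg : MemLp g (ENNReal.ofReal (r + 1)) μ) :
    MemLp (fun x ↦ g x - condSignedCenter r g T μ x) (ENNReal.ofReal (r + 1)) μ :=
  hg.sub (memLp_condSignedCenter hr hT hg)

theorem condExp_signedPow_sub_condSignedCenter (hr : 0 < r) (hT : Measurable T)
    (hg : MemLp g (ENNReal.ofReal (r + 1)) μ) :
    μ[fun x ↦ signedPow r (g x - condSignedCenter r g T μ x) | mβ.comap T] =ᵐ[μ] 0 := by
  have hgr : MemLp (fun x ↦ g x) (ENNReal.ofReal r) μ :=
    hg.mono_exponent (ENNReal.ofReal_le_ofReal (by linarith))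
  have hgT := hg.1.aemeasurable
  have hF : StronglyMeasurable fun z : β × ℝ ↦
      signedPow r (z.2 - signedCenter r (condDistrib g T μ z.1)) :=
    ((continuous_signedPow hr).measurable.comp (measurable_snd.sub
      ((measurable_signedCenter_kernel hr _).comp measurable_fst))).stronglyMeasurable
  have hint : Integrable (fun x ↦ signedPow r (g x - condSignedCenter r g T μ x)) μ :=
    (integrable_abs_rpow_of_memLp_ofReal hr ((memLp_sub_condSignedCenter hr hT hg).mono_exponent
      (ENNReal.ofReal_le_ofReal (by linarith : r ≤ r + 1)))).mono'
      ((continuous_signedPow hr).comp_aestronglyMeasurable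
        (memLp_sub_condSignedCenter hr hT hg).1)
      (ae_of_all _ fun x ↦ (abs_signedPow hr _).le)
  have hpow : AEStronglyMeasurable (fun z : β × ℝ ↦ |z.2| ^ r) (μ.map fun x ↦ (T x, g x)) :=
    ((Measurable.pow_const measurable_norm r).comp measurable_snd).aestronglyMeasurable
  have hgood : ∀ᵐ x ∂μ, Integrable (fun y : ℝ ↦ |y| ^ r) (condDistrib g T μ (T x)) :=
    Integrable.condDistrib_ae (f := fun z : β × ℝ ↦ |z.2| ^ r) hT.aemeasurable hgT
      ((integrable_map_measure hpow (hT.aemeasurable.prodMk hgT)).2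
        (integrable_abs_rpow_of_memLp_ofReal hr hgr))
  filter_upwards [condExp_prod_ae_eq_integral_condDistrib hT hgT hF hint, hgood] with x hx hgx
  exact hx.trans (integral_signedPow_sub_signedCenter hr hgx)

end ConditionalCenter

section PathSpace

variable {N d : ℕ}

/-- The path `x` stopped being recorded after time `n`: its later values are replaced by `0`.
The σ-algebra `Fn N d n` is generated by `trunc n`. -/
def trunc (n : ℕ) (x : PathD N d) : PathD N d :=
  fun i ↦ if (i : ℕ) + 1 ≤ n then x i else 0

theorem trunc_trunc (m n : ℕ) (x : PathD N d) : trunc m (trunc n x) = trunc (min m n) x := by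
  funext i
  simp only [trunc, le_min_iff, ite_and]

theorem trunc_self (x : PathD N d) : trunc N x = x :=
  funext fun i ↦ if_pos i.2

theorem measurable_trunc (n : ℕ) : Measurable (trunc n : PathD N d → PathD N d) := by
  refine measurable_pi_lambda _ fun i ↦ ?_
  by_cases h : (i : ℕ) + 1 ≤ n
  · simpa only [trunc, h, if_true] using measurable_pi_apply i
  · simp only [trunc, h, if_false, measurable_const]

theorem Fn_le (n : ℕ) : Fn N d n ≤ (inferInstance : MeasurableSpace (PathD N d)) :=
  (measurable_trunc n).comap_le

theorem measurable_Fn_of_comp_trunc {n : ℕ} {β : Type*} [MeasurableSpace β] {F : PathD N d → β}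
    (hF : Measurable F) (h : ∀ x, F (trunc n x) = F x) : Measurable[Fn N d n] F := by
  rw [show F = F ∘ trunc n from funext fun x ↦ (h x).symm]
  exact hF.comp (comap_measurable (trunc n))

theorem apply_trunc_of_measurable_Fn {n : ℕ} {β : Type*} [MeasurableSpace β]
    [MeasurableSingletonClass β] {F : PathD N d → β} (hF : Measurable[Fn N d n] F)
    (x : PathD N d) : F (trunc n x) = F x :=
  hF.factorsThrough (by rw [trunc_trunc, min_self] : trunc n (trunc n x) = trunc n x)

theorem Fn_mono {m n : ℕ} (h : m ≤ n) : Fn N d m ≤ Fn N d n :=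
  (measurable_Fn_of_comp_trunc (measurable_trunc m) fun x ↦ by
    rw [trunc_trunc, min_eq_left h]).comap_le

theorem Fn_self : Fn N d N = (inferInstance : MeasurableSpace (PathD N d)) :=
  (Fn_le N).antisymm fun _ hS ↦ measurable_Fn_of_comp_trunc measurable_id trunc_self hS

/-- The evaluation of a path at time `n` as a continuous linear map. -/
def coordL (n : ℕ) : PathD N d →L[ℝ] Fin d → ℝ :=
  if h : 1 ≤ n ∧ n ≤ N then .proj ⟨n - 1, by omega⟩ else 0

theorem coe_coordL (n : ℕ) : ⇑(coordL n) = fun x : PathD N d ↦ coord x n := by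
  unfold coordL coord
  split_ifs <;> rfl

theorem coord_succ (x : PathD N d) (i : Fin N) : coord x (i + 1) = x i :=
  dif_pos ⟨by omega, i.2⟩

theorem coord_trunc {m n : ℕ} (h : m ≤ n) (x : PathD N d) : coord (trunc n x) m = coord x m := by
  unfold coord
  split_ifs
  · exact if_pos (by simp only; omega)
  · rfl

theorem measurable_Fn_coord {m n : ℕ} (h : m ≤ n) :
    Measurable[Fn N d n] fun x : PathD N d ↦ coord x m :=
  measurable_Fn_of_comp_trunc (coe_coordL (N := N) (d := d) m ▸ (coordL m).measurable)
    (coord_trunc h)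

/-- The `s.2`-th component of the increment of a path at time `s.1 + 1`. -/
def inc (s : Fin N × Fin d) : PathD N d →L[ℝ] ℝ :=
  (ContinuousLinearMap.proj s.2).comp (coordL (s.1 + 1) - coordL s.1)

theorem inc_apply (s : Fin N × Fin d) (z : PathD N d) :
    inc s z = coord z (s.1 + 1) s.2 - coord z s.1 s.2 := by
  simp [inc, coe_coordL]

theorem measurable_Fn_inc (s : Fin N × Fin d) : Measurable[Fn N d (s.1 + 1)] (inc s) :=
  measurable_Fn_of_comp_trunc (inc s).measurable fun x ↦ by
    simp only [inc_apply, coord_trunc le_rfl, coord_trunc (Nat.le_succ _)]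

theorem sum_ite_inc (z : PathD N d) (k : Fin N) (j : Fin d) :
    ∑ i : Fin N, (if (i : ℕ) ≤ k then inc (i, j) z else 0) = z k j := by
  have hfilter : {i ∈ Finset.range N | i ≤ (k : ℕ)} = Finset.range (k + 1) := by
    ext i
    simp only [Finset.mem_filter, Finset.mem_range]
    omega
  simp only [inc_apply]
  rw [Fin.sum_univ_eq_sum_range
      (fun i ↦ if i ≤ (k : ℕ) then coord z (i + 1) j - coord z i j else 0) N,
    ← Finset.sum_filter, hfilter, Finset.sum_range_sub (fun i ↦ coord z i j), coord_succ]
  simp [coord]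

theorem coord_DeltaInv (y : PathD N d) {n : ℕ} (hn : n ≤ N) :
    coord (DeltaInv y) n = ∑ k : Fin N, if (k : ℕ) < n then y k else 0 := by
  rcases Nat.eq_zero_or_pos n with rfl | hpos
  · simp [coord]
  · rw [coord, dif_pos ⟨hpos, hn⟩]
    exact Finset.sum_congr rfl fun k _ ↦ if_congr (Nat.le_sub_one_iff_lt hpos) rfl rfl

theorem inc_DeltaInv (y : PathD N d) (s : Fin N × Fin d) : inc s (DeltaInv y) = y s.1 s.2 := by
  rw [inc_apply, ← Pi.sub_apply, coord_DeltaInv y s.1.2, coord_DeltaInv y s.1.2.le,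
    ← Finset.sum_sub_distrib, Finset.sum_eq_single s.1]
  · simp
  · intro k _ hk
    have : (k : ℕ) < s.1 + 1 ↔ (k : ℕ) < s.1 := by have := Fin.val_ne_of_ne hk; omega
    simp [this]
  · simp

theorem norm_le_sum_abs_inc (z : PathD N d) : ‖z‖ ≤ ∑ s, |inc s z| := by
  have h0 : 0 ≤ ∑ s, |inc s z| := Finset.sum_nonneg fun s _ ↦ abs_nonneg _
  refine (pi_norm_le_iff_of_nonneg h0).2 fun k ↦ (pi_norm_le_iff_of_nonneg h0).2 fun j ↦ ?_
  calc ‖z k j‖ ≤ ∑ i : Fin N, |if (i : ℕ) ≤ k then inc (i, j) z else 0| := by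
        rw [← sum_ite_inc z k j, Real.norm_eq_abs]
        exact Finset.abs_sum_le_sum_abs _ _
    _ ≤ ∑ i : Fin N, |inc (i, j) z| := by gcongr ∑ i, ?_ with i; split_ifs <;> simp
    _ ≤ ∑ i : Fin N, ∑ j, |inc (i, j) z| := by
        gcongr with i
        exact Finset.single_le_sum (f := fun j ↦ |inc (i, j) z|) (fun _ _ ↦ abs_nonneg _)
          (Finset.mem_univ j)
    _ = ∑ s, |inc s z| := (Fintype.sum_prod_type fun s ↦ |inc s z|).symm

theorem norm_rpow_le_sum_abs_inc_rpow {p : ℝ} (hp : 1 ≤ p) (z : PathD N d) :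
    ‖z‖ ^ p ≤ (Fintype.card (Fin N × Fin d) : ℝ) ^ (p - 1) * ∑ s, |inc s z| ^ p :=
  (Real.rpow_le_rpow (norm_nonneg _) (norm_le_sum_abs_inc z) (by linarith)).trans
    (Real.rpow_sum_le_const_mul_sum_rpow _ _ hp)

theorem fderiv_eq_sum_Dn_mul_inc (f : PathD N d → ℝ) (x z : PathD N d) :
    fderiv ℝ f x z = ∑ s : Fin N × Fin d, Dn f (s.1 + 1) x s.2 * inc s z := by
  set e : Fin N → Fin d → PathD N d := fun k j ↦ Pi.single k (Pi.single j 1)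
  have hz : z = ∑ k, ∑ j, z k j • e k j := by
    ext k j
    simp [e, Finset.sum_apply, Pi.single_apply, Finset.sum_ite_eq, ite_apply]
  calc fderiv ℝ f x z = ∑ k, ∑ j, z k j * fderiv ℝ f x (e k j) := by
        conv_lhs => rw [hz]
        simp only [map_sum, map_smul, smul_eq_mul]
    _ = ∑ k : Fin N, ∑ j, ∑ i : Fin N,
          (if (i : ℕ) ≤ k then fderiv ℝ f x (e k j) else 0) * inc (i, j) z := by
        simp_rw [← sum_ite_inc z, Finset.sum_mul, ite_mul, zero_mul, mul_comm]
    _ = ∑ i : Fin N, ∑ j, ∑ k : Fin N,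
          (if (i : ℕ) ≤ k then fderiv ℝ f x (e k j) else 0) * inc (i, j) z := by
        rw [Finset.sum_comm, Finset.sum_comm (γ := Fin N)]
        exact Finset.sum_congr rfl fun j _ ↦ Finset.sum_comm
    _ = ∑ s : Fin N × Fin d, Dn f (s.1 + 1) x s.2 * inc s z := by
        simp only [Fintype.sum_prod_type, Dn, Nat.add_le_add_iff_right, Finset.sum_mul, e]

theorem continuous_Dn {f : PathD N d → ℝ} (hf : ContDiff ℝ 1 f) (n : ℕ) :
    Continuous (Dn f n) := by
  refine continuous_pi fun j ↦ continuous_finsetSum _ fun k _ ↦ ?_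
  split_ifs
  · exact (hf.continuous_fderiv one_ne_zero).clm_apply continuous_const
  · exact continuous_const

end PathSpace

section LpNorm

variable {d : ℕ} {e : ℝ}

theorem lpnorm_nonneg (v : Fin d → ℝ) : 0 ≤ lpnorm e v :=
  Real.rpow_nonneg (Finset.sum_nonneg fun _ _ ↦ Real.rpow_nonneg (abs_nonneg _) _) _

theorem lpnorm_rpow (he : e ≠ 0) (v : Fin d → ℝ) : lpnorm e v ^ e = ∑ j, |v j| ^ e := by
  have h : 0 ≤ ∑ j, |v j| ^ e :=
    Finset.sum_nonneg fun j _ ↦ Real.rpow_nonneg (abs_nonneg _) _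
  rw [lpnorm, ← Real.rpow_mul h, one_div_mul_cancel he, Real.rpow_one]

theorem abs_apply_le_lpnorm (he : 0 < e) (v : Fin d → ℝ) (j : Fin d) : |v j| ≤ lpnorm e v := by
  rw [← Real.rpow_le_rpow_iff (abs_nonneg _) (lpnorm_nonneg v) he, lpnorm_rpow he.ne']
  exact Finset.single_le_sum (f := fun j ↦ |v j| ^ e)
    (fun _ _ ↦ Real.rpow_nonneg (abs_nonneg _) _) (Finset.mem_univ j)

theorem sum_Icc_one_eq_sum_fin {M : Type*} [AddCommMonoid M] (N : ℕ) (g : ℕ → M) :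
    ∑ n ∈ Finset.Icc 1 N, g n = ∑ i : Fin N, g (i + 1) := by
  rw [Fin.sum_univ_eq_sum_range (fun i ↦ g (i + 1)) N, Finset.range_eq_Ico,
    Finset.sum_Ico_add' g 0 N 1]
  rfl

theorem cN_eq_sum_abs_inc_rpow {N : ℕ} (he : e ≠ 0) (x y : PathD N d) :
    cN e x y = ∑ s, |inc s (y - x)| ^ e := by
  rw [cN, sum_Icc_one_eq_sum_fin, Fintype.sum_prod_type]
  refine Finset.sum_congr rfl fun i _ ↦ ?_
  rw [lpnorm_rpow he]
  refine Finset.sum_congr rfl fun j _ ↦ ?_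
  rw [map_sub, abs_sub_comm]
  simp [inc_apply]

end LpNorm

namespace IsMartingaleMeasure

variable {N d : ℕ} {μ : Measure (PathD N d)}

theorem integrable_coord [IsFiniteMeasure μ] (h : IsMartingaleMeasure μ) (n : ℕ) :
    Integrable (fun x ↦ coord x n) μ := by
  by_cases hn : 1 ≤ n ∧ n ≤ N
  · exact (h n hn.1 hn.2).1
  · simpa only [coord, hn, dite_false] using integrable_const 0

theorem integrable_inc [IsFiniteMeasure μ] (h : IsMartingaleMeasure μ) (s : Fin N × Fin d) :
    Integrable (inc s) μ :=
  (((h.integrable_coord _).eval s.2).sub ((h.integrable_coord _).eval s.2)).congr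
    (ae_of_all _ fun x ↦ (inc_apply s x).symm)

theorem condExp_inc_ae_eq [IsFiniteMeasure μ] (h : ∀ n, Integrable (fun x ↦ coord x n) μ)
    (s : Fin N × Fin d) :
    μ[inc s | Fn N d s.1]
      =ᵐ[μ] fun x ↦ (μ[fun x ↦ coord x (s.1 + 1) | Fn N d s.1]) x s.2 - coord x s.1 s.2 := by
  have hprev : μ[fun x ↦ coord x s.1 s.2 | Fn N d s.1] = fun x ↦ coord x s.1 s.2 :=
    condExp_of_stronglyMeasurable (Fn_le _)
      ((measurable_pi_apply s.2).comp (measurable_Fn_coord le_rfl)).stronglyMeasurable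
      ((h _).eval s.2)
  rw [show ⇑(inc s) = (fun x ↦ coord x (s.1 + 1) s.2) - fun x ↦ coord x s.1 s.2 from
    funext (inc_apply s)]
  filter_upwards [condExp_sub ((h (s.1 + 1)).eval s.2) ((h s.1).eval s.2) (Fn N d s.1),
    (ContinuousLinearMap.proj (R := ℝ) s.2).comp_condExp_comm (m := Fn N d s.1) (h (s.1 + 1))]
    with x hsub hcomm
  rw [hsub, Pi.sub_apply, hprev]
  exact congrArg (· - coord x s.1 s.2) hcomm.symm

theorem condExp_inc [IsFiniteMeasure μ] (h : IsMartingaleMeasure μ) (s : Fin N × Fin d) :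
    μ[inc s | Fn N d s.1] =ᵐ[μ] 0 := by
  filter_upwards [condExp_inc_ae_eq h.integrable_coord s, (h (s.1 + 1) (by omega) s.1.2).2]
    with x hx hmart
  rw [hx, Pi.zero_apply, sub_eq_zero]
  exact congrFun hmart s.2

theorem of_condExp_inc [IsFiniteMeasure μ] (hint : Integrable id μ)
    (h : ∀ s : Fin N × Fin d, μ[inc s | Fn N d s.1] =ᵐ[μ] 0) : IsMartingaleMeasure μ := by
  have hcoord n : Integrable (fun x ↦ coord x n) μ := by
    simpa only [coe_coordL, id_eq] using (coordL n).integrable_comp hint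
  suffices hsucc : ∀ i : Fin N,
      μ[fun x ↦ coord x (i + 1) | Fn N d i] =ᵐ[μ] fun x ↦ coord x i by
    intro n hn hnN
    obtain ⟨n, rfl⟩ := Nat.exists_eq_add_of_le' hn
    exact ⟨hcoord _, hsucc ⟨n, hnN⟩⟩
  intro i
  filter_upwards [ae_all_iff.2 fun j ↦ condExp_inc_ae_eq hcoord (i, j),
    ae_all_iff.2 fun j ↦ h (i, j)] with x heq hzero
  funext j
  exact sub_eq_zero.1 ((heq j).symm.trans (hzero j))

end IsMartingaleMeasure

section FirstOrderExpansion

variable {E : Type*} [NormedAddCommGroup E] {p q : ℝ}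

theorem exists_modulus_le_of_growth [ProperSpace E] {Ψ : E × E → ℝ} (hΨ : Continuous Ψ)
    (h₀ : ∀ x, Ψ (x, 0) = 0) {B e : ℝ} (he : 0 < e) (hB : 0 ≤ B)
    (hgrow : ∀ x w, Ψ (x, w) ≤ B * (1 + ‖x‖ ^ e) + B * ‖w‖ ^ e) {ε : ℝ} (hε : 0 < ε) (R : ℝ) :
    ∃ K, 0 ≤ K ∧ ∀ x w, Ψ (x, w) ≤
      ε + B * {x : E | R < ‖x‖}.indicator (fun x ↦ 1 + ‖x‖ ^ e) x + K * ‖w‖ ^ e := by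
  obtain ⟨u, v, -, hv, hu, h0v, huv⟩ := generalized_tube_lemma
    (isCompact_closedBall (0 : E) R) (isCompact_singleton (x := (0 : E)))
    (isOpen_lt hΨ continuous_const : IsOpen {w | Ψ w < ε}) (by
      rintro ⟨x, w⟩ ⟨-, rfl : w = 0⟩
      simpa [h₀] using hε)
  obtain ⟨η, hη, hηv⟩ := Metric.isOpen_iff.1 hv 0 (h0v rfl)
  set K := B * (1 + |R| ^ e) / η ^ e with hK
  have hK₀ : 0 ≤ K := by positivity
  refine ⟨K + B, by positivity, fun x w ↦ ?_⟩
  have hw₀ : 0 ≤ ‖w‖ ^ e := by positivity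
  rcases lt_or_ge R ‖x‖ with hx | hx
  · rw [indicator_of_mem (show x ∈ {x : E | R < ‖x‖} from hx)]
    linarith [hgrow x w, mul_nonneg hK₀ hw₀]
  rw [indicator_of_notMem (by simpa using hx), mul_zero, add_zero]
  rcases lt_or_ge ‖w‖ η with hw | hw
  · have hclose : Ψ (x, w) < ε := huv ⟨hu (by simpa using hx), hηv (by simpa using hw)⟩
    linarith [mul_nonneg hK₀ hw₀, mul_nonneg hB hw₀]
  · have hxR : B * (1 + ‖x‖ ^ e) ≤ B * (1 + |R| ^ e) := by
      gcongr
      exact hx.trans (le_abs_self R)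
    have hfar : B * (1 + |R| ^ e) ≤ K * ‖w‖ ^ e := by
      rw [hK, div_mul_eq_mul_div, le_div_iff₀ (by positivity)]
      gcongr
    linarith [hgrow x w]

theorem memLp_one_add_norm_rpow {Ω : Type*} [MeasurableSpace Ω] {μ : Measure Ω}
    [IsFiniteMeasure μ] {X : Ω → E} (hpq : p.HolderConjugate q)
    (hX : MemLp X (ENNReal.ofReal p) μ) :
    MemLp (fun ω ↦ 1 + ‖X ω‖ ^ (p - 1)) (ENNReal.ofReal q) μ := by
  have hpow := hX.norm_rpow_div (ENNReal.ofReal (p - 1))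
  rw [ENNReal.toReal_ofReal hpq.sub_one_pos.le, ← ENNReal.ofReal_div_of_pos hpq.sub_one_pos,
    ← hpq.conjugate_eq] at hpow
  exact (memLp_const (1 : ℝ)).add hpow

theorem integrable_norm_rpow_of_memLp_ofReal {Ω : Type*} [MeasurableSpace Ω] {μ : Measure Ω}
    {X : Ω → E} (hp : 0 < p) (hX : MemLp X (ENNReal.ofReal p) μ) :
    Integrable (fun ω ↦ ‖X ω‖ ^ p) μ := by
  simpa only [abs_norm] using integrable_abs_rpow_of_memLp_ofReal hp hX.norm

theorem integral_comp_mul_norm_le {Ω α : Type*} [MeasurableSpace Ω] [MeasurableSpace α]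
    {π : Measure Ω} {μ : Measure α} (hpq : p.HolderConjugate q) {T : Ω → α}
    (hT : MeasurePreserving T π μ) {g : α → ℝ} (hg₀ : 0 ≤ g) (hg : MemLp g (ENNReal.ofReal q) μ)
    {W : Ω → E} (hW : MemLp W (ENNReal.ofReal p) π) :
    ∫ ω, g (T ω) * ‖W ω‖ ∂π ≤
      (∫ x, g x ^ q ∂μ) ^ (1 / q) * (∫ ω, ‖W ω‖ ^ p ∂π) ^ (1 / p) := by
  have hint : ∫ x, g x ^ q ∂μ = ∫ ω, g (T ω) ^ q ∂π := by
    rw [← hT.map_eq, integral_map hT.aemeasurable]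
    exact hT.map_eq ▸ (hg.1.aemeasurable.pow_const q).aestronglyMeasurable
  rw [hint]
  exact integral_mul_le_Lp_mul_Lq_of_nonneg hpq.symm (ae_of_all π fun ω ↦ hg₀ (T ω))
    (ae_of_all π fun ω ↦ norm_nonneg (W ω)) (hg.comp_measurePreserving hT) hW.norm

theorem exists_integral_indicator_norm_gt_rpow_le [MeasurableSpace E] [BorelSpace E]
    {μ : Measure E} {g : E → ℝ} (hq : 0 < q) (hg₀ : 0 ≤ g) (hg : MemLp g (ENNReal.ofReal q) μ)
    {ε : ℝ} (hε : 0 < ε) :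
    ∃ R : ℝ, (∫ x, {x : E | R < ‖x‖}.indicator g x ^ q ∂μ) ^ (1 / q) ≤ ε := by
  have hS (n : ℕ) : MeasurableSet {x : E | (n : ℝ) < ‖x‖} :=
    measurableSet_lt measurable_const measurable_norm
  have hanti : Antitone fun n : ℕ ↦ {x : E | (n : ℝ) < ‖x‖} := fun m n hmn x (hx : (n : ℝ) < ‖x‖) ↦
    (Nat.cast_le.2 hmn : (m : ℝ) ≤ n).trans_lt hx
  have hempty : ⋂ n : ℕ, {x : E | (n : ℝ) < ‖x‖} = ∅ := by
    refine eq_empty_of_forall_notMem fun x hx ↦ ?_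
    obtain ⟨n, hn⟩ := exists_nat_ge ‖x‖
    exact (mem_iInter.1 hx n).not_ge hn
  have htail := tendsto_setIntegral_of_antitone hS hanti (f := fun x ↦ |g x| ^ q)
    ⟨0, (integrable_abs_rpow_of_memLp_ofReal hq hg).integrableOn⟩
  rw [hempty, setIntegral_empty] at htail
  obtain ⟨n, hn⟩ := (htail.eventually (gt_mem_nhds (Real.rpow_pos_of_pos hε q))).exists
  have hpow : (fun x ↦ {x : E | (n : ℝ) < ‖x‖}.indicator g x ^ q)
      = {x : E | (n : ℝ) < ‖x‖}.indicator fun x ↦ |g x| ^ q := by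
    funext x
    by_cases hx : x ∈ {x : E | (n : ℝ) < ‖x‖}
    · rw [indicator_of_mem hx, indicator_of_mem hx, abs_of_nonneg (hg₀ x)]
    · rw [indicator_of_notMem hx, indicator_of_notMem hx, Real.zero_rpow hq.ne']
  refine ⟨n, ?_⟩
  rw [hpow, integral_indicator (hS n), one_div]
  exact (Real.rpow_inv_le_iff_of_pos
    (setIntegral_nonneg (hS n) fun x _ ↦ Real.rpow_nonneg (abs_nonneg _) _) hε.le hq).2 hn.le

theorem exists_integral_norm_add_indicator_mul_norm_le [MeasurableSpace E] [BorelSpace E]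
    {μ : Measure E} (hpq : p.HolderConjugate q) {g : E → ℝ} (hg₀ : 0 ≤ g)
    (hg : MemLp g (ENNReal.ofReal q) μ) {B ε : ℝ} (hB : 0 ≤ B) (hε : 0 < ε) :
    ∃ R : ℝ, ∀ (π : Measure (E × E)) [IsProbabilityMeasure π], MeasurePreserving Prod.fst π μ →
      ∀ W : E × E → E, MemLp W (ENNReal.ofReal p) π →
      Integrable (fun z ↦ ε / 2 * ‖W z‖ + B * ({x | R < ‖x‖}.indicator g z.1 * ‖W z‖)) π ∧
      ∫ z, (ε / 2 * ‖W z‖ + B * ({x | R < ‖x‖}.indicator g z.1 * ‖W z‖)) ∂π ≤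
        ε * (∫ z, ‖W z‖ ^ p ∂π) ^ (1 / p) := by
  obtain ⟨R, hR⟩ := exists_integral_indicator_norm_gt_rpow_le hpq.symm.pos hg₀ hg
    (show 0 < ε / 2 / (B + 1) by positivity)
  refine ⟨R, fun π _ hfst W hW ↦ ?_⟩
  set J : E → ℝ := {x | R < ‖x‖}.indicator g
  set S : ℝ := (∫ z, ‖W z‖ ^ p ∂π) ^ (1 / p) with hS
  have hJ₀ : 0 ≤ J := indicator_nonneg fun x _ ↦ hg₀ x
  have hJ : MemLp J (ENNReal.ofReal q) μ :=
    hg.indicator (measurableSet_lt measurable_const measurable_norm)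
  have hnorm : Integrable (fun z ↦ ε / 2 * ‖W z‖) π :=
    (hW.norm.integrable (ENNReal.one_le_ofReal.2 hpq.lt.le)).const_mul _
  have hJnorm : Integrable (fun z ↦ B * (J z.1 * ‖W z‖)) π :=
    (integrable_mul_of_memLp_ofReal hpq.symm (hJ.comp_measurePreserving hfst) hW.norm).const_mul _
  have hone : ∫ z, ‖W z‖ ∂π ≤ S := by
    simpa [hS] using integral_comp_mul_norm_le hpq (.id π) (fun _ ↦ zero_le_one) (memLp_const 1) hW
  have htail : B * ∫ z, J z.1 * ‖W z‖ ∂π ≤ ε / 2 * S := calc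
    B * ∫ z, J z.1 * ‖W z‖ ∂π ≤ (B + 1) * (ε / 2 / (B + 1) * S) := by
        gcongr
        · exact integral_nonneg fun z ↦ mul_nonneg (hJ₀ _) (norm_nonneg _)
        · linarith
        · exact (integral_comp_mul_norm_le hpq hfst hJ₀ hJ hW).trans (by gcongr)
    _ = ε / 2 * S := by field_simp
  refine ⟨hnorm.add hJnorm, ?_⟩
  calc ∫ z, (ε / 2 * ‖W z‖ + B * (J z.1 * ‖W z‖)) ∂π
      = ε / 2 * ∫ z, ‖W z‖ ∂π + B * ∫ z, J z.1 * ‖W z‖ ∂π := by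
        rw [integral_add hnorm hJnorm, integral_const_mul, integral_const_mul]
    _ ≤ ε / 2 * S + ε / 2 * S := by gcongr
    _ = ε * S := by ring

variable [NormedSpace ℝ E]

/-- `f` is a `C¹` function whose derivative grows at most like `1 + ‖x‖ ^ (p - 1)`, so that `f`
itself has growth of order `p`. -/
structure HasGrowth (p : ℝ) (f : E → ℝ) : Prop where
  contDiff : ContDiff ℝ 1 f
  exists_norm_fderiv_le : ∃ C, 0 ≤ C ∧ ∀ x, ‖fderiv ℝ f x‖ ≤ C * (1 + ‖x‖ ^ (p - 1))

namespace HasGrowth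

variable {f : E → ℝ}

theorem differentiableAt (hf : HasGrowth p f) (x : E) : DifferentiableAt ℝ f x :=
  hf.contDiff.differentiable one_ne_zero x

theorem memLp_fderiv_apply [MeasurableSpace E] [BorelSpace E] {μ : Measure E} [IsFiniteMeasure μ]
    (hf : HasGrowth p f) (hpq : p.HolderConjugate q) (hμ : MemLp id (ENNReal.ofReal p) μ) (v : E) :
    MemLp (fun x ↦ fderiv ℝ f x v) (ENNReal.ofReal q) μ := by
  obtain ⟨C, -, hC⟩ := hf.exists_norm_fderiv_le
  refine ((memLp_one_add_norm_rpow hpq hμ).const_mul (‖v‖ * C)).mono'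
    ((hf.contDiff.continuous_fderiv one_ne_zero).clm_apply
      continuous_const).stronglyMeasurable.aestronglyMeasurable (ae_of_all _ fun x ↦ ?_)
  calc ‖fderiv ℝ f x v‖ ≤ ‖fderiv ℝ f x‖ * ‖v‖ := (fderiv ℝ f x).le_opNorm v
    _ ≤ C * (1 + ‖x‖ ^ (p - 1)) * ‖v‖ := by gcongr; exact hC x
    _ = ‖v‖ * C * (1 + ‖x‖ ^ (p - 1)) := by ring

theorem exists_abs_le (hf : HasGrowth p f) (hp : 1 < p) :
    ∃ C, ∀ y, |f y| ≤ |f 0| + C * (‖y‖ + ‖y‖ ^ p) := by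
  obtain ⟨C, hC₀, hC⟩ := hf.exists_norm_fderiv_le
  refine ⟨C, fun y ↦ ?_⟩
  have hmean := (convex_closedBall (0 : E) ‖y‖).norm_image_sub_le_of_norm_fderiv_le
    (f := f) (C := C * (1 + ‖y‖ ^ (p - 1))) (fun x _ ↦ hf.differentiableAt x)
    (fun x hx ↦ (hC x).trans (by gcongr; exact mem_closedBall_zero_iff.1 hx))
    (Metric.mem_closedBall_self (norm_nonneg y)) (mem_closedBall_zero_iff.2 le_rfl)
  rw [sub_zero, mul_assoc, add_mul, one_mul, ← Real.rpow_add_one' (norm_nonneg y) (by linarith),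
    sub_add_cancel, Real.norm_eq_abs] at hmean
  linarith [abs_sub_abs_le_abs_sub (f y) (f 0)]

theorem integrable_comp {Ω : Type*} [MeasurableSpace Ω] {μ : Measure Ω} [IsFiniteMeasure μ]
    (hf : HasGrowth p f) (hp : 1 < p) {X : Ω → E} (hX : MemLp X (ENNReal.ofReal p) μ) :
    Integrable (fun ω ↦ f (X ω)) μ := by
  obtain ⟨C, hC⟩ := hf.exists_abs_le hp
  have hnorm : Integrable (fun ω ↦ ‖X ω‖) μ :=
    hX.norm.integrable (ENNReal.one_le_ofReal.2 hp.le)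
  exact ((integrable_const |f 0|).add ((hnorm.add (integrable_norm_rpow_of_memLp_ofReal
    (by linarith) hX)).const_mul C)).mono'
    (hf.contDiff.continuous.comp_aestronglyMeasurable hX.1) (ae_of_all _ fun ω ↦ hC (X ω))

theorem exists_norm_fderiv_add_sub_le (hf : HasGrowth p f) (hp : 1 < p) :
    ∃ B, 0 ≤ B ∧ ∀ x w, ‖fderiv ℝ f (x + w) - fderiv ℝ f x‖ ≤
      B * (1 + ‖x‖ ^ (p - 1)) + B * ‖w‖ ^ (p - 1) := by
  obtain ⟨C, hC₀, hC⟩ := hf.exists_norm_fderiv_le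
  refine ⟨C * (2 + 2 ^ (p - 1)), by positivity, fun x w ↦ ?_⟩
  have hadd : ‖x + w‖ ^ (p - 1) ≤ 2 ^ (p - 1) * (‖x‖ ^ (p - 1) + ‖w‖ ^ (p - 1)) :=
    (Real.rpow_le_rpow (norm_nonneg _) (norm_add_le x w) (by linarith)).trans
      (add_rpow_le_two_rpow_mul (norm_nonneg _) (norm_nonneg _) (by linarith))
  have hx : 0 ≤ ‖x‖ ^ (p - 1) := by positivity
  have hw : 0 ≤ ‖w‖ ^ (p - 1) := by positivity
  have h2 : (0 : ℝ) ≤ 2 ^ (p - 1) := by positivity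
  calc ‖fderiv ℝ f (x + w) - fderiv ℝ f x‖
      ≤ C * (1 + ‖x + w‖ ^ (p - 1)) + C * (1 + ‖x‖ ^ (p - 1)) :=
        (norm_sub_le _ _).trans (add_le_add (hC _) (hC _))
    _ = C * (2 + ‖x + w‖ ^ (p - 1) + ‖x‖ ^ (p - 1)) := by ring
    _ ≤ C * ((2 + 2 ^ (p - 1)) * (1 + ‖x‖ ^ (p - 1) + ‖w‖ ^ (p - 1))) := by
        gcongr
        nlinarith
    _ = _ := by ring

theorem exists_abs_sub_sub_fderiv_le [ProperSpace E] (hf : HasGrowth p f) (hp : 1 < p) :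
    ∃ B, 0 ≤ B ∧ ∀ ε R : ℝ, 0 < ε → ∃ K, 0 ≤ K ∧ ∀ x y,
      |f y - f x - fderiv ℝ f x (y - x)| ≤
        ε * ‖y - x‖ + B * ({x : E | R < ‖x‖}.indicator (fun x ↦ 1 + ‖x‖ ^ (p - 1)) x * ‖y - x‖)
          + K * ‖y - x‖ ^ p := by
  obtain ⟨B, hB, hgrow⟩ := hf.exists_norm_fderiv_add_sub_le hp
  have hcont : Continuous fun w : E × E ↦ ‖fderiv ℝ f (w.1 + w.2) - fderiv ℝ f w.1‖ := by
    have := hf.contDiff.continuous_fderiv one_ne_zero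
    fun_prop
  refine ⟨B, hB, fun ε R hε ↦ ?_⟩
  obtain ⟨K, hK, hmod⟩ := exists_modulus_le_of_growth hcont (by simp) (by linarith) hB hgrow hε R
  refine ⟨K, hK, fun x y ↦ ?_⟩
  have hbound w (hw : w ∈ Metric.closedBall x ‖y - x‖) : ‖fderiv ℝ f w - fderiv ℝ f x‖ ≤
      ε + B * {x : E | R < ‖x‖}.indicator (fun x ↦ 1 + ‖x‖ ^ (p - 1)) x
        + K * ‖y - x‖ ^ (p - 1) := by
    have h := hmod x (w - x)
    simp only [add_sub_cancel] at h
    refine h.trans ?_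
    gcongr
    exact mem_closedBall_iff_norm.1 hw
  have hmean := (convex_closedBall x ‖y - x‖).norm_image_sub_le_of_norm_fderiv_le'
    (fun w _ ↦ hf.differentiableAt w) hbound (Metric.mem_closedBall_self (norm_nonneg _))
    (mem_closedBall_iff_norm.2 le_rfl)
  rwa [Real.norm_eq_abs, add_mul, add_mul, mul_assoc K, mul_assoc B,
    ← Real.rpow_add_one' (norm_nonneg _) (by linarith), sub_add_cancel] at hmean

theorem integrable_fderiv_apply {Ω : Type*} [MeasurableSpace Ω] {π : Measure Ω}
    [IsFiniteMeasure π] (hf : HasGrowth p f) (hpq : p.HolderConjugate q) {X W : Ω → E}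
    (hX : MemLp X (ENNReal.ofReal p) π) (hW : MemLp W (ENNReal.ofReal p) π) :
    Integrable (fun ω ↦ fderiv ℝ f (X ω) (W ω)) π := by
  obtain ⟨C, -, hC⟩ := hf.exists_norm_fderiv_le
  refine ((integrable_mul_of_memLp_ofReal hpq.symm (memLp_one_add_norm_rpow hpq hX)
    hW.norm).const_mul C).mono' ?_ (ae_of_all _ fun ω ↦ ?_)
  · have hcont : Continuous fun z : E × E ↦ fderiv ℝ f z.1 z.2 :=
      ((hf.contDiff.continuous_fderiv one_ne_zero).comp continuous_fst).clm_apply continuous_snd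
    exact hcont.comp_aestronglyMeasurable (hX.1.prodMk hW.1)
  · rw [← mul_assoc]
    exact (fderiv ℝ f (X ω)).le_of_opNorm_le (hC (X ω)) (W ω)

theorem exists_abs_integral_sub_sub_le [ProperSpace E] [MeasurableSpace E] [BorelSpace E]
    {μ : Measure E} [IsProbabilityMeasure μ] (hf : HasGrowth p f) (hpq : p.HolderConjugate q)
    (hμ : MemLp id (ENNReal.ofReal p) μ) {ε : ℝ} (hε : 0 < ε) :
    ∃ K, 0 ≤ K ∧ ∀ (π : Measure (E × E)) [IsProbabilityMeasure π],
      MeasurePreserving Prod.fst π μ → MemLp (fun z ↦ z.2 - z.1) (ENNReal.ofReal p) π →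
      |∫ z, f z.2 ∂π - ∫ x, f x ∂μ - ∫ z, fderiv ℝ f z.1 (z.2 - z.1) ∂π| ≤
        ε * (∫ z, ‖z.2 - z.1‖ ^ p ∂π) ^ (1 / p) + K * ∫ z, ‖z.2 - z.1‖ ^ p ∂π := by
  obtain ⟨B, hB, hexp⟩ := hf.exists_abs_sub_sub_fderiv_le hpq.lt
  obtain ⟨R, hR⟩ := exists_integral_norm_add_indicator_mul_norm_le hpq
    (g := fun x ↦ 1 + ‖x‖ ^ (p - 1)) (fun x ↦ by positivity) (memLp_one_add_norm_rpow hpq hμ)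
    hB hε
  obtain ⟨K, hK, hexp⟩ := hexp (ε / 2) R (by positivity)
  refine ⟨K, hK, fun π _ hfst hW ↦ ?_⟩
  obtain ⟨hRint, hRle⟩ := hR π hfst _ hW
  have hX : MemLp Prod.fst (ENNReal.ofReal p) π := hμ.comp_measurePreserving hfst
  have hY : MemLp Prod.snd (ENNReal.ofReal p) π := by
    simpa only [Pi.add_def, add_sub_cancel] using hX.add hW
  have hfX := hf.integrable_comp hpq.lt hX
  have hfY := hf.integrable_comp hpq.lt hY
  have hlin := hf.integrable_fderiv_apply hpq hX hW
  have hrpow := (integrable_norm_rpow_of_memLp_ofReal hpq.pos hW).const_mul K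
  have hfμ : ∫ x, f x ∂μ = ∫ z, f z.1 ∂π := by
    rw [← hfst.map_eq, integral_map hfst.aemeasurable
      hf.contDiff.continuous.stronglyMeasurable.aestronglyMeasurable]
  have hfYX : Integrable (fun z ↦ f z.2 - f z.1) π := hfY.sub hfX
  rw [hfμ, ← integral_sub hfY hfX, ← integral_sub hfYX hlin]
  refine (norm_integral_le_of_norm_le
    (f := fun z ↦ f z.2 - f z.1 - fderiv ℝ f z.1 (z.2 - z.1)) (hRint.add hrpow)
    (ae_of_all _ fun z ↦ hexp z.1 z.2)).trans ?_
  rw [integral_add' hRint hrpow, integral_const_mul]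
  gcongr

end HasGrowth

end FirstOrderExpansion

section Couplings

variable {N d : ℕ} {p q : ℝ} {μ : Measure (PathD N d)} {π : Measure (PathD N d × PathD N d)}

theorem memLp_inc_sub (hp : 0 < p) (hcost : Integrable (fun z ↦ cN p z.1 z.2) π)
    (s : Fin N × Fin d) : MemLp (fun z ↦ inc s (z.2 - z.1)) (ENNReal.ofReal p) π := by
  have hcont : Continuous fun z : PathD N d × PathD N d ↦ inc s (z.2 - z.1) := by fun_prop
  refine (memLp_ofReal_iff_integrable_abs_rpow hp hcont.aestronglyMeasurable).2
    (hcost.mono' (hcont.abs.rpow_const fun _ ↦ Or.inr hp.le).aestronglyMeasurable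
      (ae_of_all _ fun z ↦ ?_))
  rw [Real.norm_of_nonneg (by positivity), cN_eq_sum_abs_inc_rpow hp.ne']
  exact Finset.single_le_sum (f := fun s ↦ |inc s (z.2 - z.1)| ^ p)
    (fun _ _ ↦ by positivity) (Finset.mem_univ s)

theorem memLp_sub (hp : 0 < p) (hcost : Integrable (fun z ↦ cN p z.1 z.2) π) :
    MemLp (fun z ↦ z.2 - z.1) (ENNReal.ofReal p) π :=
  (memLp_finsetSum Finset.univ fun s _ ↦ (memLp_inc_sub hp hcost s).abs).mono'
    (by fun_prop : Continuous fun z : PathD N d × PathD N d ↦ z.2 - z.1).aestronglyMeasurable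
    (ae_of_all _ fun z ↦ norm_le_sum_abs_inc (z.2 - z.1))

theorem costD_eq_sum (hp : 0 < p) (hcost : Integrable (fun z ↦ cN p z.1 z.2) π) :
    costD p π = ∑ s, ∫ z, |inc s (z.2 - z.1)| ^ p ∂π := by
  rw [costD, ← integral_finsetSum _ fun s _ ↦
    integrable_abs_rpow_of_memLp_ofReal hp (memLp_inc_sub hp hcost s)]
  exact integral_congr_ae (ae_of_all _ fun z ↦ cN_eq_sum_abs_inc_rpow hp.ne' z.1 z.2)

theorem costD_nonneg (hp : p ≠ 0) : 0 ≤ costD p π :=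
  integral_nonneg fun z ↦ by
    simp only [Pi.zero_apply, cN_eq_sum_abs_inc_rpow hp]
    positivity

theorem integral_norm_sub_rpow_le_costD (hp : 1 ≤ p)
    (hcost : Integrable (fun z ↦ cN p z.1 z.2) π) :
    ∫ z, ‖z.2 - z.1‖ ^ p ∂π ≤ (Fintype.card (Fin N × Fin d) : ℝ) ^ (p - 1) * costD p π := by
  have hp₀ : 0 < p := by linarith
  rw [costD, ← integral_const_mul]
  refine integral_mono (integrable_norm_rpow_of_memLp_ofReal hp₀ (memLp_sub hp₀ hcost))
    (hcost.const_mul _) fun z ↦ ?_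
  simpa only [cN_eq_sum_abs_inc_rpow hp₀.ne'] using norm_rpow_le_sum_abs_inc_rpow hp (z.2 - z.1)

theorem hasGrowth_of_lpnorm_Dn_le {f : PathD N d → ℝ} (hq : 0 < q) (hf : ContDiff ℝ 1 f) {C : ℝ}
    (hgrow : ∀ n x, lpnorm q (Dn f n x) ≤ C * (1 + ‖x‖ ^ (p - 1))) : HasGrowth p f := by
  refine ⟨hf, |C| * ∑ s : Fin N × Fin d, ‖inc s‖, by positivity, fun x ↦
    ContinuousLinearMap.opNorm_le_bound _ (by positivity) fun z ↦ ?_⟩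
  have hC (s : Fin N × Fin d) : |Dn f (s.1 + 1) x s.2| ≤ |C| * (1 + ‖x‖ ^ (p - 1)) :=
    (abs_apply_le_lpnorm hq _ _).trans ((hgrow _ x).trans (by gcongr; exact le_abs_self C))
  calc ‖fderiv ℝ f x z‖ ≤ ∑ s, |Dn f (s.1 + 1) x s.2 * inc s z| := by
        rw [fderiv_eq_sum_Dn_mul_inc]
        exact Finset.abs_sum_le_sum_abs _ _
    _ ≤ ∑ s : Fin N × Fin d, |C| * (1 + ‖x‖ ^ (p - 1)) * (‖inc s‖ * ‖z‖) := by
        gcongr with s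
        rw [abs_mul]
        exact mul_le_mul (hC s) ((inc s).le_opNorm z) (abs_nonneg _) (by positivity)
    _ = |C| * (∑ s : Fin N × Fin d, ‖inc s‖) * (1 + ‖x‖ ^ (p - 1)) * ‖z‖ := by
        rw [← Finset.mul_sum, ← Finset.sum_mul]
        ring

theorem memLp_id_of_integrable_norm_rpow (hp : 0 < p) (hmom : Integrable (fun x ↦ ‖x‖ ^ p) μ) :
    MemLp id (ENNReal.ofReal p) μ := by
  refine (integrable_norm_rpow_iff measurable_id.aestronglyMeasurable (by simpa using hp)
    ENNReal.ofReal_ne_top).1 ?_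
  simpa only [id_eq, ENNReal.toReal_ofReal hp.le] using hmom

theorem Dn_eq_fderiv (f : PathD N d → ℝ) (s : Fin N × Fin d) (x : PathD N d) :
    Dn f (s.1 + 1) x s.2
      = fderiv ℝ f x (DeltaInv fun i j ↦ (Pi.single s (1 : ℝ) : Fin N × Fin d → ℝ) (i, j)) := by
  simp [fderiv_eq_sum_Dn_mul_inc, inc_DeltaInv, Pi.single_apply]

theorem HasGrowth.memLp_Dn [IsFiniteMeasure μ] {f : PathD N d → ℝ} (hf : HasGrowth p f)
    (hpq : p.HolderConjugate q) (hμ : MemLp id (ENNReal.ofReal p) μ) (s : Fin N × Fin d) :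
    MemLp (fun x ↦ Dn f (s.1 + 1) x s.2) (ENNReal.ofReal q) μ := by
  simpa only [Dn_eq_fderiv] using hf.memLp_fderiv_apply hpq hμ _

theorem HasGrowth.exists_abs_integral_sub_sub_sum_le [IsProbabilityMeasure μ]
    {f : PathD N d → ℝ} (hf : HasGrowth p f) (hpq : p.HolderConjugate q)
    (hμ : MemLp id (ENNReal.ofReal p) μ) {ε : ℝ} (hε : 0 < ε) :
    ∃ K, 0 ≤ K ∧ ∀ (π : Measure (PathD N d × PathD N d)) [IsProbabilityMeasure π],
      MeasurePreserving Prod.fst π μ → Integrable (fun z ↦ cN p z.1 z.2) π →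
      |∫ z, f z.2 ∂π - ∫ x, f x ∂μ
          - ∑ s, ∫ z, Dn f (s.1 + 1) z.1 s.2 * inc s (z.2 - z.1) ∂π| ≤
        ε * costD p π ^ (1 / p) + K * costD p π := by
  set A : ℝ := (Fintype.card (Fin N × Fin d) : ℝ) ^ (p - 1)
  obtain ⟨K, hK, hexp⟩ := hf.exists_abs_integral_sub_sub_le hpq hμ
    (show 0 < ε / (A ^ (1 / p) + 1) by positivity)
  refine ⟨K * A, by positivity, fun π _ hfst hcost ↦ ?_⟩
  have hnorm := integral_norm_sub_rpow_le_costD hpq.lt.le hcost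
  have hlin : ∫ z, fderiv ℝ f z.1 (z.2 - z.1) ∂π
      = ∑ s, ∫ z, Dn f (s.1 + 1) z.1 s.2 * inc s (z.2 - z.1) ∂π := by
    simp_rw [fderiv_eq_sum_Dn_mul_inc]
    exact integral_finsetSum _ fun s _ ↦ integrable_mul_of_memLp_ofReal hpq.symm
      ((hf.memLp_Dn hpq hμ s).comp_measurePreserving hfst) (memLp_inc_sub hpq.pos hcost s)
  have hc : 0 ≤ costD p π := costD_nonneg hpq.ne_zero
  rw [← hlin]
  refine (hexp π hfst (memLp_sub hpq.pos hcost)).trans (add_le_add ?_ ?_)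
  · calc ε / (A ^ (1 / p) + 1) * (∫ z, ‖z.2 - z.1‖ ^ p ∂π) ^ (1 / p)
        ≤ ε / (A ^ (1 / p) + 1) * (A * costD p π) ^ (1 / p) := by
          have := one_div_nonneg.2 hpq.nonneg
          gcongr
      _ = A ^ (1 / p) / (A ^ (1 / p) + 1) * (ε * costD p π ^ (1 / p)) := by
          rw [Real.mul_rpow (by positivity) hc]
          ring
      _ ≤ ε * costD p π ^ (1 / p) :=
          mul_le_of_le_one_left (by positivity) ((div_le_one (by positivity)).2 (by linarith))
  · rw [mul_assoc]
    gcongr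

end Couplings

section Causality

variable {N d : ℕ} {p q : ℝ} {μ : Measure (PathD N d)}

theorem comap_Fn_le {Ω : Type*} [mΩ : MeasurableSpace Ω] {Z : Ω → PathD N d} (hZ : Measurable Z)
    (n : ℕ) : (Fn N d n).comap Z ≤ mΩ :=
  (MeasurableSpace.comap_mono (Fn_le n)).trans hZ.comap_le

theorem CondIndepOn.integral_mul_comp_eq_zero {Ω : Type*} [MeasurableSpace Ω] {π : Measure Ω}
    [IsFiniteMeasure π] {ν : Measure (PathD N d)} [IsFiniteMeasure ν] {X Y : Ω → PathD N d} {n : ℕ}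
    (h : CondIndepOn π ((Fn N d n).comap X) ((Fn N d n).comap Y) ((Fn N d N).comap X))
    (hX : MeasurePreserving X π ν) (hY : Measurable Y) {a c : PathD N d → ℝ} (ha : Integrable a ν)
    (ham : Measurable a) (ha₀ : ν[a | Fn N d n] =ᵐ[ν] 0) (hc : Measurable[Fn N d n] c)
    (hac : Integrable (fun ω ↦ a (X ω) * c (Y ω)) π) : ∫ ω, a (X ω) * c (Y ω) ∂π = 0 := by
  have haX : Integrable (a ∘ X) π := hX.integrable_comp_of_integrable ha
  have haX₀ : π[a ∘ X | (Fn N d n).comap X] =ᵐ[π] 0 :=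
    (condExp_comp_ae_eq_of_measurePreserving hX (Fn_le n) ha).trans
      (hX.quasiMeasurePreserving.ae_eq_comp ha₀)
  have haXm : StronglyMeasurable[(Fn N d N).comap X] (a ∘ X) := by
    rw [Fn_self]
    exact (ham.comp (comap_measurable X)).stronglyMeasurable
  exact integral_mul_eq_zero_of_condExp_ae_eq_zero (comap_Fn_le hY n) haX
    (h.condExp_ae_eq_zero (comap_Fn_le hX.measurable n) (comap_Fn_le hY n)
      (comap_Fn_le hX.measurable N) haX haXm haX₀)
    (hc.comp (comap_measurable Y)).stronglyMeasurable hac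

/-- The couplings over which `VMartD` is a supremum. -/
def IsCompetitor (p : ℝ) (μ : Measure (PathD N d)) (π : Measure (PathD N d × PathD N d)) : Prop :=
  IsProbabilityMeasure π ∧ IsBicausalCoupling μ (π.map Prod.snd) π ∧
    IsMartingaleMeasure (π.map Prod.snd) ∧ Integrable (fun z ↦ cN p z.1 z.2) π

namespace IsCompetitor

variable {π : Measure (PathD N d × PathD N d)}

theorem isProbabilityMeasure (h : IsCompetitor p μ π) : IsProbabilityMeasure π := h.1

theorem integrable_cN (h : IsCompetitor p μ π) : Integrable (fun z ↦ cN p z.1 z.2) π := h.2.2.2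

theorem measurePreserving_fst (h : IsCompetitor p μ π) : MeasurePreserving Prod.fst π μ :=
  ⟨measurable_fst, h.2.1.1.2.1⟩

theorem isProbabilityMeasure_left (h : IsCompetitor p μ π) : IsProbabilityMeasure μ := by
  have := h.isProbabilityMeasure
  rw [← h.measurePreserving_fst.map_eq]
  exact Measure.isProbabilityMeasure_map measurable_fst.aemeasurable

theorem condIndepOn_fst_fst (h : IsCompetitor p μ π) (n : ℕ) :
    CondIndepOn π ((Fn N d n).comap Prod.fst) ((Fn N d n).comap Prod.fst)
      ((Fn N d N).comap Prod.fst) :=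
  have := h.isProbabilityMeasure
  .of_forall_exists_ae_eq (comap_Fn_le measurable_fst n) (comap_Fn_le measurable_fst N)
    fun A hA ↦ ⟨A, hA, ae_eq_rfl⟩

theorem memLp_inc_fst (h : IsCompetitor p μ π) (hμ : MemLp id (ENNReal.ofReal p) μ)
    (s : Fin N × Fin d) : MemLp (fun z ↦ inc s z.1) (ENNReal.ofReal p) π :=
  ((inc s).comp_memLp' hμ).comp_measurePreserving h.measurePreserving_fst

theorem memLp_inc_snd (h : IsCompetitor p μ π) (hp : 0 < p) (hμ : MemLp id (ENNReal.ofReal p) μ)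
    (s : Fin N × Fin d) : MemLp (fun z ↦ inc s z.2) (ENNReal.ofReal p) π := by
  simpa only [Pi.add_def, map_sub, add_sub_cancel] using
    (h.memLp_inc_fst hμ s).add (memLp_inc_sub hp h.integrable_cN s)

-- The increments of `Y` up to time `n` see the past of `X` only, by causality from `X` to `Y`.
theorem integral_mul_inc_sub_eq_zero_of_condExp_eq_zero (h : IsCompetitor p μ π)
    (hpq : p.HolderConjugate q) (hμ : MemLp id (ENNReal.ofReal p) μ) {s : Fin N × Fin d}
    {a : PathD N d → ℝ} (ham : Measurable a) (haL : MemLp a (ENNReal.ofReal q) μ)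
    (ha₀ : μ[a | Fn N d (s.1 + 1)] =ᵐ[μ] 0) : ∫ z, a z.1 * inc s (z.2 - z.1) ∂π = 0 := by
  have := h.isProbabilityMeasure
  have := h.isProbabilityMeasure_left
  have hX := h.measurePreserving_fst
  have haX : MemLp (fun z ↦ a z.1) (ENNReal.ofReal q) π := haL.comp_measurePreserving hX
  have hai := integrable_of_memLp_ofReal hpq.symm.lt.le haL
  have hiX := integrable_mul_of_memLp_ofReal hpq.symm haX (h.memLp_inc_fst hμ s)
  have hiY := integrable_mul_of_memLp_ofReal hpq.symm haX (h.memLp_inc_snd hpq.pos hμ s)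
  simp only [map_sub, mul_sub]
  rw [integral_sub hiY hiX,
    (h.2.1.1.2.2 (s.1 + 1)).integral_mul_comp_eq_zero hX measurable_snd hai ham ha₀
      (measurable_Fn_inc s) hiY,
    (h.condIndepOn_fst_fst _).integral_mul_comp_eq_zero hX measurable_fst hai ham ha₀
      (measurable_Fn_inc s) hiX,
    sub_zero]

-- Causality from `Y` to `X` keeps the increments of `Y` centred given the past of `X`.
theorem integral_mul_inc_sub_eq_zero_of_measurable (h : IsCompetitor p μ π)
    (hmart : IsMartingaleMeasure μ) (hpq : p.HolderConjugate q)
    (hμ : MemLp id (ENNReal.ofReal p) μ) {s : Fin N × Fin d} {η : PathD N d → ℝ}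
    (hηm : Measurable[Fn N d s.1] η) (hη : MemLp η (ENNReal.ofReal q) μ) :
    ∫ z, η z.1 * inc s (z.2 - z.1) ∂π = 0 := by
  have := h.isProbabilityMeasure
  have := h.isProbabilityMeasure_left
  have hX := h.measurePreserving_fst
  have : IsProbabilityMeasure (π.map Prod.snd) :=
    Measure.isProbabilityMeasure_map measurable_snd.aemeasurable
  have hηX : MemLp (fun z ↦ η z.1) (ENNReal.ofReal q) π := hη.comp_measurePreserving hX
  have hiX := integrable_mul_of_memLp_ofReal hpq (h.memLp_inc_fst hμ s) hηX
  have hiY := integrable_mul_of_memLp_ofReal hpq (h.memLp_inc_snd hpq.pos hμ s) hηX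
  simp only [map_sub, mul_comm (η _), sub_mul]
  rw [integral_sub hiY hiX,
    (h.2.1.2 s.1).integral_mul_comp_eq_zero ⟨measurable_snd, rfl⟩ measurable_fst
      (h.2.2.1.integrable_inc s) (inc s).measurable (h.2.2.1.condExp_inc s) hηm hiY,
    (h.condIndepOn_fst_fst s.1).integral_mul_comp_eq_zero hX measurable_fst
      (hmart.integrable_inc s) (inc s).measurable (hmart.condExp_inc s) hηm hiX,
    sub_zero]

end IsCompetitor

end Causality

section PredictableDistance

variable {N d : ℕ} {p q : ℝ} {μ : Measure (PathD N d)} {g : Fin N × Fin d → PathD N d → ℝ}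

/-- A process with predictable components in `L^q(μ)`, indexed by time and coordinate:
`η (i, j)` is the `j`-th component at time `i + 1`. -/
structure IsPredictableLp (q : ℝ) (μ : Measure (PathD N d))
    (η : Fin N × Fin d → PathD N d → ℝ) : Prop where
  measurable s : Measurable[Fn N d s.1] (η s)
  memLp s : MemLp (η s) (ENNReal.ofReal q) μ

/-- The `L^q(μ)`-distance from the process `g` to the predictable processes. -/
def predDist (q : ℝ) (μ : Measure (PathD N d)) (g : Fin N × Fin d → PathD N d → ℝ) : ℝ :=
  ⨅ η : {η // IsPredictableLp q μ η}, (∑ s, ∫ x, |g s x - η.1 s x| ^ q ∂μ) ^ (1 / q)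

theorem predDist_le {η : Fin N × Fin d → PathD N d → ℝ} (hη : IsPredictableLp q μ η) :
    predDist q μ g ≤ (∑ s, ∫ x, |g s x - η s x| ^ q ∂μ) ^ (1 / q) :=
  ciInf_le (f := fun η : {η // IsPredictableLp q μ η} ↦
      (∑ s, ∫ x, |g s x - η.1 s x| ^ q ∂μ) ^ (1 / q))
    ⟨0, by rintro _ ⟨η, rfl⟩; positivity⟩ ⟨η, hη⟩

theorem isPredictableLp_of_isPredictable {h : ℕ → PathD N d → Fin d → ℝ} (hq : 0 < q)
    (hpred : IsPredictable h)
    (hint : ∀ n, 1 ≤ n → n ≤ N → Integrable (fun x ↦ lpnorm q (h n x) ^ q) μ) :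
    IsPredictableLp q μ fun (s : Fin N × Fin d) x ↦ h (s.1 + 1) x s.2 := by
  have hm (s : Fin N × Fin d) : Measurable[Fn N d s.1] fun x ↦ h (s.1 + 1) x s.2 :=
    (measurable_pi_apply s.2).comp (hpred (s.1 + 1) (Nat.le_add_left ..) s.1.2)
  refine ⟨hm, fun s ↦ ?_⟩
  have hms := ((hm s).mono (Fn_le _) le_rfl).aestronglyMeasurable (μ := μ)
  rw [memLp_ofReal_iff_integrable_abs_rpow hq hms]
  refine (hint (s.1 + 1) (Nat.le_add_left ..) s.1.2).mono' ?_ (ae_of_all _ fun x ↦ ?_)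
  · exact (Real.continuous_rpow_const hq.le).comp_aestronglyMeasurable hms.norm
  · rw [Real.norm_of_nonneg (by positivity)]
    exact Real.rpow_le_rpow (abs_nonneg _) (abs_apply_le_lpnorm hq _ _) hq.le

theorem exists_isPredictable_of_isPredictableLp (hq : 0 < q) {η : Fin N × Fin d → PathD N d → ℝ}
    (hη : IsPredictableLp q μ η) : ∃ h : ℕ → PathD N d → Fin d → ℝ, IsPredictable h ∧
      (∀ n, 1 ≤ n → n ≤ N → Integrable (fun x ↦ lpnorm q (h n x) ^ q) μ) ∧
      ∀ s x, h (s.1 + 1) x s.2 = η s x := by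
  have hs (i : Fin N) : 1 ≤ (i : ℕ) + 1 ∧ (i : ℕ) + 1 ≤ N := ⟨Nat.le_add_left .., i.2⟩
  refine ⟨fun n x j ↦ if hn : 1 ≤ n ∧ n ≤ N then η (⟨n - 1, by omega⟩, j) x else 0,
    fun n h₁ h₂ ↦ ?_, fun n h₁ h₂ ↦ ?_, fun s x ↦ by simp [hs]⟩
  · simp only [h₁, h₂, and_self, dite_true]
    exact @measurable_pi_lambda _ _ _ (Fn N d (n - 1)) _ _ fun j ↦ hη.measurable (⟨n - 1, _⟩, j)
  · simp only [h₁, h₂, and_self, dite_true, lpnorm_rpow hq.ne']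
    exact integrable_finsetSum _ fun j _ ↦ integrable_abs_rpow_of_memLp_ofReal hq (hη.memLp _)

theorem IsCompetitor.sum_integral_mul_inc_le {π : Measure (PathD N d × PathD N d)}
    (h : IsCompetitor p μ π) (hmart : IsMartingaleMeasure μ) (hpq : p.HolderConjugate q)
    (hμ : MemLp id (ENNReal.ofReal p) μ) (hg : ∀ s, MemLp (g s) (ENNReal.ofReal q) μ) :
    ∑ s, ∫ z, g s z.1 * inc s (z.2 - z.1) ∂π ≤ predDist q μ g * costD p π ^ (1 / p) := by
  have hX := h.measurePreserving_fst
  have hinc s := memLp_inc_sub hpq.pos h.integrable_cN s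
  have hzero : IsPredictableLp q μ (fun (_ : Fin N × Fin d) (_ : PathD N d) ↦ 0) :=
    ⟨fun _ ↦ measurable_const, fun _ ↦ MemLp.zero⟩
  have : Nonempty {η // IsPredictableLp q μ η} := ⟨⟨_, hzero⟩⟩
  rw [predDist, Real.iInf_mul_of_nonneg (Real.rpow_nonneg (costD_nonneg hpq.ne_zero) _)]
  refine le_ciInf fun ⟨η, hη⟩ ↦ ?_
  have hsub s : MemLp (fun x ↦ g s x - η s x) (ENNReal.ofReal q) μ := (hg s).sub (hη.memLp s)
  have hcomp s : MemLp (fun z : _ × PathD N d ↦ g s z.1 - η s z.1) (ENNReal.ofReal q) π :=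
    (hsub s).comp_measurePreserving hX
  have hlin s : ∫ z, g s z.1 * inc s (z.2 - z.1) ∂π
      = ∫ z, (g s z.1 - η s z.1) * inc s (z.2 - z.1) ∂π := by
    have hgX : MemLp (fun z ↦ g s z.1) (ENNReal.ofReal q) π := (hg s).comp_measurePreserving hX
    have hηX : MemLp (fun z ↦ η s z.1) (ENNReal.ofReal q) π :=
      (hη.memLp s).comp_measurePreserving hX
    simp only [sub_mul]
    rw [integral_sub (integrable_mul_of_memLp_ofReal hpq.symm hgX (hinc s))
        (integrable_mul_of_memLp_ofReal hpq.symm hηX (hinc s)),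
      h.integral_mul_inc_sub_eq_zero_of_measurable hmart hpq hμ (hη.measurable s) (hη.memLp s),
      sub_zero]
  have hpow s : ∫ x, |g s x - η s x| ^ q ∂μ = ∫ z, |g s z.1 - η s z.1| ^ q ∂π := by
    rw [← hX.map_eq, integral_map hX.aemeasurable]
    exact hX.map_eq ▸ (integrable_abs_rpow_of_memLp_ofReal hpq.symm.pos (hsub s)).1
  simp only [hlin, hpow, costD_eq_sum hpq.pos h.integrable_cN]
  exact (le_abs_self _).trans (sum_integral_mul_le hpq.symm hcomp hinc)

/-- A family of martingale differences in `L^p(μ)`, indexed by time and coordinate: they are the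
directions in which a martingale measure can be perturbed. -/
structure IsMartingaleDifference (p : ℝ) (μ : Measure (PathD N d))
    (φ : Fin N × Fin d → PathD N d → ℝ) : Prop where
  measurable s : Measurable[Fn N d (s.1 + 1)] (φ s)
  memLp s : MemLp (φ s) (ENNReal.ofReal p) μ
  condExp_eq_zero s : μ[φ s | Fn N d s.1] =ᵐ[μ] 0

theorem IsMartingaleDifference.const_mul {φ : Fin N × Fin d → PathD N d → ℝ}
    (h : IsMartingaleDifference p μ φ) (c : ℝ) :
    IsMartingaleDifference p μ fun s x ↦ c * φ s x where
  measurable s := (h.measurable s).const_mul c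
  memLp s := (h.memLp s).const_mul c
  condExp_eq_zero s := by
    filter_upwards [condExp_smul c (φ s) (Fn N d s.1), h.condExp_eq_zero s] with x hx hx₀
    exact hx.trans (by simp [hx₀])

theorem IsMartingaleDifference.zero :
    IsMartingaleDifference p μ (fun (_ : Fin N × Fin d) (_ : PathD N d) ↦ 0) where
  measurable _ := measurable_const
  memLp _ := MemLp.zero
  condExp_eq_zero _ := condExp_zero.eventuallyEq

theorem isPredictableLp_condSignedCenter [IsFiniteMeasure μ] (hq : 1 < q)
    (hg : ∀ s, MemLp (g s) (ENNReal.ofReal q) μ) :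
    IsPredictableLp q μ fun s ↦ condSignedCenter (q - 1) (g s) (trunc s.1) μ where
  measurable _ := measurable_condSignedCenter (sub_pos.2 hq)
  memLp s := by
    have hgs : MemLp (g s) (ENNReal.ofReal (q - 1 + 1)) μ := by
      simpa only [sub_add_cancel] using hg s
    simpa only [sub_add_cancel] using
      memLp_condSignedCenter (sub_pos.2 hq) (measurable_trunc _) hgs

theorem abs_signedPow_sub_one_rpow (hpq : p.HolderConjugate q) (t : ℝ) :
    |signedPow (q - 1) t| ^ p = |t| ^ q := by
  rw [abs_signedPow hpq.symm.sub_one_pos, ← Real.rpow_mul (abs_nonneg _),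
    hpq.symm.sub_one_mul_conj]

theorem isMartingaleDifference_signedPow_sub_condSignedCenter [IsFiniteMeasure μ]
    (hpq : p.HolderConjugate q) (hgm : ∀ s, Measurable[Fn N d (s.1 + 1)] (g s))
    (hg : ∀ s, MemLp (g s) (ENNReal.ofReal q) μ) :
    IsMartingaleDifference p μ fun s x ↦
      signedPow (q - 1) (g s x - condSignedCenter (q - 1) (g s) (trunc s.1) μ x) := by
  have hr := hpq.symm.sub_one_pos
  have hη := isPredictableLp_condSignedCenter hpq.symm.lt hg
  have hm s : Measurable[Fn N d (s.1 + 1)] fun x ↦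
      signedPow (q - 1) (g s x - condSignedCenter (q - 1) (g s) (trunc s.1) μ x) :=
    (continuous_signedPow hr).measurable.comp
      ((hgm s).sub ((hη.measurable s).mono (Fn_mono (Nat.le_succ _)) le_rfl))
  refine ⟨hm, fun s ↦ ?_, fun s ↦ ?_⟩
  · rw [memLp_ofReal_iff_integrable_abs_rpow hpq.pos
      ((hm s).mono (Fn_le _) le_rfl).aestronglyMeasurable]
    simp only [abs_signedPow_sub_one_rpow hpq]
    exact integrable_abs_rpow_of_memLp_ofReal hpq.symm.pos ((hg s).sub (hη.memLp s))
  · exact condExp_signedPow_sub_condSignedCenter hr (measurable_trunc _)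
      (by simpa only [sub_add_cancel] using hg s)

-- The conditional signed centre `η` of `g` is its best predictable approximation; the first order
-- condition says that `φ = |g - η| ^ (q - 1) * sign (g - η)` is a martingale difference.
theorem exists_isMartingaleDifference_predDist_rpow_le [IsFiniteMeasure μ]
    (hpq : p.HolderConjugate q) (hgm : ∀ s, Measurable[Fn N d (s.1 + 1)] (g s))
    (hg : ∀ s, MemLp (g s) (ENNReal.ofReal q) μ) :
    ∃ φ, IsMartingaleDifference p μ φ ∧
      predDist q μ g ≤ (∑ s, ∫ x, |φ s x| ^ p ∂μ) ^ (1 / q) ∧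
      ∑ s, ∫ x, g s x * φ s x ∂μ = ∑ s, ∫ x, |φ s x| ^ p ∂μ := by
  have hη := isPredictableLp_condSignedCenter hpq.symm.lt hg
  have hφ := isMartingaleDifference_signedPow_sub_condSignedCenter hpq hgm hg
  set η : Fin N × Fin d → PathD N d → ℝ := fun s ↦
    condSignedCenter (q - 1) (g s) (trunc s.1) μ
  refine ⟨fun s x ↦ signedPow (q - 1) (g s x - η s x), hφ,
    by simpa only [abs_signedPow_sub_one_rpow hpq] using predDist_le hη,
    Finset.sum_congr rfl fun s _ ↦ ?_⟩
  have hφη : Integrable (fun x ↦ signedPow (q - 1) (g s x - η s x) * η s x) μ :=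
    integrable_mul_of_memLp_ofReal hpq (hφ.memLp s) (hη.memLp s)
  have horth := integral_mul_eq_zero_of_condExp_ae_eq_zero (Fn_le s.1)
    (integrable_of_memLp_ofReal hpq.lt.le (hφ.memLp s)) (hφ.condExp_eq_zero s)
    (hη.measurable s).stronglyMeasurable hφη
  have hsplit x : g s x * signedPow (q - 1) (g s x - η s x)
      = |signedPow (q - 1) (g s x - η s x)| ^ p + signedPow (q - 1) (g s x - η s x) * η s x := by
    have hmul := mul_signedPow hpq.symm.sub_one_pos (g s x - η s x)
    rw [sub_add_cancel] at hmul
    rw [abs_signedPow_sub_one_rpow hpq, ← hmul]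
    ring
  simp only [hsplit]
  rw [integral_add (integrable_abs_rpow_of_memLp_ofReal hpq.pos (hφ.memLp s)) hφη, horth, add_zero]

theorem exists_isMartingaleDifference_predDist_le [IsFiniteMeasure μ]
    (hpq : p.HolderConjugate q) (hgm : ∀ s, Measurable[Fn N d (s.1 + 1)] (g s))
    (hg : ∀ s, MemLp (g s) (ENNReal.ofReal q) μ) :
    ∃ φ, IsMartingaleDifference p μ φ ∧ ∑ s, ∫ x, |φ s x| ^ p ∂μ ≤ 1 ∧
      predDist q μ g ≤ ∑ s, ∫ x, g s x * φ s x ∂μ := by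
  obtain ⟨φ, hφ, hdist, hlin⟩ := exists_isMartingaleDifference_predDist_rpow_le hpq hgm hg
  set A : ℝ := ∑ s, ∫ x, |φ s x| ^ p ∂μ with hA
  have hA₀ : 0 ≤ A := by positivity
  rcases hA₀.eq_or_lt with h0 | hpos
  · refine ⟨_, .zero, by simp [Real.zero_rpow hpq.ne_zero], ?_⟩
    simpa [← h0, Real.zero_rpow (inv_ne_zero hpq.symm.ne_zero)] using hdist
  refine ⟨_, hφ.const_mul (A ^ (-(1 / p))), ?_, ?_⟩
  · have hpow : (A ^ (-(1 / p))) ^ p = A⁻¹ := by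
      rw [← Real.rpow_mul hA₀, neg_mul, one_div_mul_cancel hpq.ne_zero, Real.rpow_neg_one]
    have hscale s x : |A ^ (-(1 / p)) * φ s x| ^ p = A⁻¹ * |φ s x| ^ p := by
      rw [abs_mul, Real.mul_rpow (abs_nonneg _) (abs_nonneg _),
        abs_of_nonneg (Real.rpow_nonneg hA₀ _), hpow]
    simp only [hscale, integral_const_mul, ← Finset.mul_sum, ← hA]
    exact (inv_mul_cancel₀ hpos.ne').le
  · simp only [mul_left_comm _ (A ^ (-(1 / p))), integral_const_mul, ← Finset.mul_sum, hlin]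
    refine hdist.trans_eq ?_
    rw [← Real.rpow_add_one hpos.ne']
    congr 1
    have := hpq.inv_add_inv_eq_one
    simp only [one_div]
    linarith

end PredictableDistance

section OptionalProjection

variable {N d : ℕ} {p q : ℝ} {μ : Measure (PathD N d)} {f : PathD N d → ℝ}

/-- The optional projection of the pathwise Malliavin derivative of `f`, indexed by time and
coordinate: `optProj μ f (i, j)` is the `j`-th component at time `i + 1`. -/
def optProj (μ : Measure (PathD N d)) (f : PathD N d → ℝ) (s : Fin N × Fin d) (x : PathD N d) : ℝ :=
  (μ[Dn f (s.1 + 1) | Fn N d (s.1 + 1)]) x s.2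

theorem measurable_optProj (s : Fin N × Fin d) :
    Measurable[Fn N d (s.1 + 1)] (optProj μ f s) :=
  (measurable_pi_apply s.2).comp stronglyMeasurable_condExp.measurable

variable [IsFiniteMeasure μ]

theorem optProj_ae_eq (hq : 1 ≤ q)
    (hD : ∀ s : Fin N × Fin d, MemLp (fun x ↦ Dn f (s.1 + 1) x s.2) (ENNReal.ofReal q) μ)
    (s : Fin N × Fin d) :
    optProj μ f s =ᵐ[μ] μ[fun x ↦ Dn f (s.1 + 1) x s.2 | Fn N d (s.1 + 1)] :=
  (ContinuousLinearMap.proj (R := ℝ) (φ := fun _ : Fin d ↦ ℝ) s.2).comp_condExp_comm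
    (.of_eval fun j ↦ integrable_of_memLp_ofReal hq (hD (s.1, j)))

theorem memLp_optProj (hq : 1 ≤ q)
    (hD : ∀ s : Fin N × Fin d, MemLp (fun x ↦ Dn f (s.1 + 1) x s.2) (ENNReal.ofReal q) μ)
    (s : Fin N × Fin d) : MemLp (optProj μ f s) (ENNReal.ofReal q) μ :=
  ((hD s).condExp (ENNReal.one_le_ofReal.2 hq)).ae_eq (optProj_ae_eq hq hD s).symm

theorem condExp_Dn_sub_optProj (hq : 1 ≤ q)
    (hD : ∀ s : Fin N × Fin d, MemLp (fun x ↦ Dn f (s.1 + 1) x s.2) (ENNReal.ofReal q) μ)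
    (s : Fin N × Fin d) :
    μ[fun x ↦ Dn f (s.1 + 1) x s.2 - optProj μ f s x | Fn N d (s.1 + 1)] =ᵐ[μ] 0 := by
  have hsub : (fun x ↦ Dn f (s.1 + 1) x s.2 - optProj μ f s x) =ᵐ[μ]
      (fun x ↦ Dn f (s.1 + 1) x s.2) - μ[fun x ↦ Dn f (s.1 + 1) x s.2 | Fn N d (s.1 + 1)] := by
    filter_upwards [optProj_ae_eq hq hD s] with x hx
    rw [hx, Pi.sub_apply]
  exact (condExp_congr_ae hsub).trans
    (condExp_sub_condExp_ae_eq_zero (Fn_le _) (integrable_of_memLp_ofReal hq (hD s)))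

theorem IsCompetitor.sum_integral_Dn_mul_inc_le {π : Measure (PathD N d × PathD N d)}
    (h : IsCompetitor p μ π) (hmart : IsMartingaleMeasure μ) (hpq : p.HolderConjugate q)
    (hμ : MemLp id (ENNReal.ofReal p) μ) (hf : ContDiff ℝ 1 f)
    (hD : ∀ s : Fin N × Fin d, MemLp (fun x ↦ Dn f (s.1 + 1) x s.2) (ENNReal.ofReal q) μ) :
    ∑ s : Fin N × Fin d, ∫ z, Dn f (s.1 + 1) z.1 s.2 * inc s (z.2 - z.1) ∂π
      ≤ predDist q μ (optProj μ f) * costD p π ^ (1 / p) := by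
  have hg := memLp_optProj hpq.symm.lt.le hD
  refine (Finset.sum_congr rfl fun s _ ↦ ?_).trans_le (h.sum_integral_mul_inc_le hmart hpq hμ hg)
  have hX := h.measurePreserving_fst
  have hinc := memLp_inc_sub hpq.pos h.integrable_cN s
  have hDX : MemLp (fun z ↦ Dn f (s.1 + 1) z.1 s.2) (ENNReal.ofReal q) π :=
    (hD s).comp_measurePreserving hX
  have hgX : MemLp (fun z ↦ optProj μ f s z.1) (ENNReal.ofReal q) π :=
    (hg s).comp_measurePreserving hX
  have hDm : Measurable fun x ↦ Dn f (s.1 + 1) x s.2 :=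
    (measurable_pi_apply s.2).comp (continuous_Dn hf _).measurable
  have horth := h.integral_mul_inc_sub_eq_zero_of_condExp_eq_zero hpq hμ
    (hDm.sub ((measurable_optProj s).mono (Fn_le _) le_rfl)) ((hD s).sub (hg s))
    (condExp_Dn_sub_optProj hpq.symm.lt.le hD s)
  simp only [Pi.sub_apply, sub_mul] at horth
  rwa [integral_sub (integrable_mul_of_memLp_ofReal hpq.symm hDX hinc)
    (integrable_mul_of_memLp_ofReal hpq.symm hgX hinc), sub_eq_zero] at horth

theorem integral_Dn_mul_eq_integral_optProj_mul (hpq : p.HolderConjugate q)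
    (hD : ∀ s : Fin N × Fin d, MemLp (fun x ↦ Dn f (s.1 + 1) x s.2) (ENNReal.ofReal q) μ)
    {s : Fin N × Fin d} {φ : PathD N d → ℝ} (hφm : Measurable[Fn N d (s.1 + 1)] φ)
    (hφ : MemLp φ (ENNReal.ofReal p) μ) :
    ∫ x, Dn f (s.1 + 1) x s.2 * φ x ∂μ = ∫ x, optProj μ f s x * φ x ∂μ := by
  have hq := hpq.symm.lt.le
  have hg := memLp_optProj hq hD s
  have hDg : MemLp (fun x ↦ Dn f (s.1 + 1) x s.2 - optProj μ f s x) (ENNReal.ofReal q) μ :=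
    (hD s).sub hg
  have horth := integral_mul_eq_zero_of_condExp_ae_eq_zero (Fn_le _)
    (integrable_of_memLp_ofReal hq hDg) (condExp_Dn_sub_optProj hq hD s) hφm.stronglyMeasurable
    (integrable_mul_of_memLp_ofReal hpq.symm hDg hφ)
  simp only [sub_mul] at horth
  rwa [integral_sub (integrable_mul_of_memLp_ofReal hpq.symm (hD s) hφ)
    (integrable_mul_of_memLp_ofReal hpq.symm hg hφ), sub_eq_zero] at horth

theorem sum_integral_lpnorm_condExp_Dn_sub_rpow {h : ℕ → PathD N d → Fin d → ℝ} (hq : 1 ≤ q)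
    (hD : ∀ s : Fin N × Fin d, MemLp (fun x ↦ Dn f (s.1 + 1) x s.2) (ENNReal.ofReal q) μ)
    (hh : IsPredictableLp q μ fun (s : Fin N × Fin d) x ↦ h (s.1 + 1) x s.2) :
    ∑ n ∈ Finset.Icc 1 N, ∫ x, lpnorm q ((μ[Dn f n | Fn N d n]) x - h n x) ^ q ∂μ
      = ∑ s, ∫ x, |optProj μ f s x - h (s.1 + 1) x s.2| ^ q ∂μ := by
  have hq₀ := zero_lt_one.trans_le hq
  rw [sum_Icc_one_eq_sum_fin, Fintype.sum_prod_type]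
  refine Finset.sum_congr rfl fun i _ ↦ ?_
  simp only [lpnorm_rpow hq₀.ne']
  exact integral_finsetSum _ fun j _ ↦ integrable_abs_rpow_of_memLp_ofReal hq₀
    ((memLp_optProj hq hD (i, j)).sub (hh.memLp (i, j)))

theorem iInf_isPredictable_eq_predDist (hq : 1 ≤ q)
    (hD : ∀ s : Fin N × Fin d, MemLp (fun x ↦ Dn f (s.1 + 1) x s.2) (ENNReal.ofReal q) μ) :
    (⨅ h : {h : ℕ → PathD N d → Fin d → ℝ // IsPredictable h ∧
        ∀ n, 1 ≤ n → n ≤ N → Integrable (fun x ↦ lpnorm q (h n x) ^ q) μ},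
      (∑ n ∈ Finset.Icc 1 N,
        ∫ x, lpnorm q ((μ[Dn f n | Fn N d n]) x - h.1 n x) ^ q ∂μ) ^ (1 / q))
      = predDist q μ (optProj μ f) := by
  have hq₀ := zero_lt_one.trans_le hq
  refine Function.Surjective.iInf_congr (fun h ↦
    ⟨_, isPredictableLp_of_isPredictable hq₀ h.2.1 h.2.2⟩) (fun η ↦ ?_) fun h ↦ ?_
  · obtain ⟨h, hpred, hint, hη⟩ := exists_isPredictable_of_isPredictableLp hq₀ η.2
    exact ⟨⟨h, hpred, hint⟩, Subtype.ext (funext₂ hη)⟩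
  · rw [sum_integral_lpnorm_condExp_Dn_sub_rpow hq hD
      (isPredictableLp_of_isPredictable hq₀ h.2.1 h.2.2)]

end OptionalProjection

section LipschitzApproximation

variable {N d : ℕ} {p q : ℝ} {μ : Measure (PathD N d)}

/-- The component `φ (i, j)` is `K`-Lipschitz in the last value seen by `F_{i + 1}` once the past
up to time `i` is fixed. -/
def IsLipschitzInLast (K : ℝ≥0) (φ : Fin N × Fin d → PathD N d → ℝ) : Prop :=
  ∀ s x y, trunc s.1 x = trunc s.1 y → |φ s x - φ s y| ≤ K * ‖x s.1 - y s.1‖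

theorem IsLipschitzInLast.const_mul {K : ℝ≥0} {φ : Fin N × Fin d → PathD N d → ℝ}
    (h : IsLipschitzInLast K φ) (c : ℝ≥0) : IsLipschitzInLast (c * K) fun s x ↦ c * φ s x := by
  intro s x y hxy
  rw [← mul_sub, abs_mul, NNReal.abs_eq, NNReal.coe_mul, mul_assoc]
  exact mul_le_mul_of_nonneg_left (h s x y hxy) c.2

theorem norm_trunc_succ_sub_le (i : Fin N) {x y : PathD N d} (h : trunc i x = trunc i y) :
    ‖trunc (i + 1) x - trunc (i + 1) y‖ ≤ ‖x i - y i‖ := by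
  refine (pi_norm_le_iff_of_nonneg (norm_nonneg _)).2 fun k ↦ ?_
  have hk := congrFun h k
  simp only [trunc, Pi.sub_apply, Nat.succ_le_iff, Nat.lt_succ_iff] at hk ⊢
  rcases lt_trichotomy k i with hki | rfl | hki
  · simp only [Fin.lt_def.1 hki, (Fin.lt_def.1 hki).le, if_true] at hk ⊢
    simp [hk]
  · simp
  · simp [(Fin.lt_def.1 hki).not_ge]

theorem sum_integral_abs_inv_mul_rpow_le_one {φ : Fin N × Fin d → PathD N d → ℝ} (hp : 1 ≤ p)
    {c : ℝ} (hc : 1 ≤ c) (hφc : ∑ s, ∫ x, |φ s x| ^ p ∂μ ≤ c) :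
    ∑ s, ∫ x, |c⁻¹ * φ s x| ^ p ∂μ ≤ 1 := by
  have hc₀ := zero_lt_one.trans_le hc
  have hpow : (c⁻¹) ^ p ≤ c⁻¹ := by
    simpa using Real.rpow_le_rpow_of_exponent_ge (inv_pos.2 hc₀) (inv_le_one_of_one_le₀ hc) hp
  have hmul s x : |c⁻¹ * φ s x| ^ p = (c⁻¹) ^ p * |φ s x| ^ p := by
    rw [abs_mul, abs_of_pos (inv_pos.2 hc₀), Real.mul_rpow (inv_pos.2 hc₀).le (abs_nonneg _)]
  simp only [hmul, integral_const_mul]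
  rw [← Finset.mul_sum, ← inv_mul_cancel₀ hc₀.ne']
  gcongr

variable [IsFiniteMeasure μ]

theorem exists_lipschitzWith_eLpNorm_sub_comp_trunc_le (hp : 1 ≤ p) {n : ℕ} {φ : PathD N d → ℝ}
    (hφm : Measurable[Fn N d n] φ) (hφ : MemLp φ (ENNReal.ofReal p) μ) {ε : ℝ} (hε : 0 < ε) :
    ∃ (K : ℝ≥0) (g : PathD N d → ℝ), LipschitzWith K g ∧
      MemLp (g ∘ trunc n) (ENNReal.ofReal p) μ ∧
      eLpNorm (φ - g ∘ trunc n) (ENNReal.ofReal p) μ ≤ ENNReal.ofReal ε := by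
  have hT := measurable_trunc (N := N) (d := d) n
  have hφ' := hφm.mono (Fn_le _) le_rfl
  have hφT : φ ∘ trunc n = φ := funext (apply_trunc_of_measurable_Fn hφm)
  have hφν : MemLp φ (ENNReal.ofReal p) (μ.map (trunc n)) := by
    rwa [memLp_map_measure_iff hφ'.aestronglyMeasurable hT.aemeasurable, hφT]
  obtain ⟨g, hgc, hgs, hge⟩ :=
    hφν.exist_eLpNorm_sub_le ENNReal.ofReal_ne_top (ENNReal.one_le_ofReal.2 hp) hε
  obtain ⟨K, hK⟩ := ContDiff.lipschitzWith_of_hasCompactSupport hgc hgs (by simp)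
  have hgm := hgs.continuous.measurable
  rw [eLpNorm_map_measure (hφ'.sub hgm).aestronglyMeasurable hT.aemeasurable] at hge
  have hdiff : eLpNorm (φ - g ∘ trunc n) (ENNReal.ofReal p) μ ≤ ENNReal.ofReal ε := by
    rwa [← hφT]
  refine ⟨K, g, hK, ?_, hdiff⟩
  have hsub := hφ.sub ⟨(hφ'.sub (hgm.comp hT)).aestronglyMeasurable,
    hdiff.trans_lt ENNReal.ofReal_lt_top⟩
  rwa [sub_sub_cancel] at hsub

theorem eLpNorm_sub_sub_condExp_le {m : MeasurableSpace (PathD N d)} (hp : 1 ≤ p)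
    {φ G : PathD N d → ℝ} (hφ : MemLp φ (ENNReal.ofReal p) μ)
    (hG : MemLp G (ENNReal.ofReal p) μ) (hφ₀ : μ[φ | m] =ᵐ[μ] 0) :
    eLpNorm (φ - (G - μ[G | m])) (ENNReal.ofReal p) μ
      ≤ 2 * eLpNorm (φ - G) (ENNReal.ofReal p) μ := by
  have hp' := ENNReal.one_le_ofReal.2 hp
  have hd := hφ.sub hG
  have heq : φ - (G - μ[G | m]) =ᵐ[μ] (φ - G) - μ[φ - G | m] := by
    filter_upwards [hφ₀, condExp_sub (integrable_of_memLp_ofReal hp hφ)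
      (integrable_of_memLp_ofReal hp hG) m] with x hx₀ hx
    simp only [Pi.sub_apply, Pi.zero_apply] at hx₀ hx ⊢
    rw [hx, hx₀]
    ring
  rw [eLpNorm_congr_ae heq, two_mul]
  exact (eLpNorm_sub_le hd.1 (hd.condExp hp').1 hp').trans
    (add_le_add_right (eLpNorm_condExp_le_eLpNorm _ hp') _)

theorem exists_lipschitz_condExp_eq_zero_eLpNorm_sub_le (hp : 1 ≤ p) (i : Fin N)
    {φ : PathD N d → ℝ} (hφm : Measurable[Fn N d (i + 1)] φ) (hφ : MemLp φ (ENNReal.ofReal p) μ)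
    (hφ₀ : μ[φ | Fn N d i] =ᵐ[μ] 0) {ε : ℝ} (hε : 0 < ε) :
    ∃ (K : ℝ≥0) (ψ : PathD N d → ℝ), Measurable[Fn N d (i + 1)] ψ ∧
      MemLp ψ (ENNReal.ofReal p) μ ∧ μ[ψ | Fn N d i] =ᵐ[μ] 0 ∧
      (∀ x y, trunc i x = trunc i y → |ψ x - ψ y| ≤ K * ‖x i - y i‖) ∧
      eLpNorm (φ - ψ) (ENNReal.ofReal p) μ ≤ 2 * ENNReal.ofReal ε := by
  obtain ⟨K, g, hK, hG, hgφ⟩ := exists_lipschitzWith_eLpNorm_sub_comp_trunc_le hp hφm hφ hε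
  set G := g ∘ trunc (i + 1)
  have hcm : Measurable[Fn N d i] (μ[G | Fn N d i]) := stronglyMeasurable_condExp.measurable
  refine ⟨K, G - μ[G | Fn N d i], ?_, hG.sub (hG.condExp (ENNReal.one_le_ofReal.2 hp)),
    condExp_sub_condExp_ae_eq_zero (Fn_le _) (integrable_of_memLp_ofReal hp hG),
    fun x y hxy ↦ ?_, (eLpNorm_sub_sub_condExp_le hp hφ hG hφ₀).trans (by gcongr)⟩
  · exact (hK.continuous.measurable.comp (comap_measurable _)).sub
      (hcm.mono (Fn_mono (Nat.le_succ _)) le_rfl)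
  · have hcond : (μ[G | Fn N d i]) x = (μ[G | Fn N d i]) y := by
      rw [← apply_trunc_of_measurable_Fn hcm x, hxy, apply_trunc_of_measurable_Fn hcm y]
    rw [Pi.sub_apply, Pi.sub_apply, hcond, sub_sub_sub_cancel_right, ← Real.dist_eq]
    refine (hK.dist_le_mul _ _).trans ?_
    rw [dist_eq_norm]
    exact mul_le_mul_of_nonneg_left (norm_trunc_succ_sub_le i hxy) K.2

theorem IsMartingaleDifference.exists_isLipschitzInLast_eLpNorm_sub_le
    {φ : Fin N × Fin d → PathD N d → ℝ} (h : IsMartingaleDifference p μ φ) (hp : 1 ≤ p) {ε : ℝ}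
    (hε : 0 < ε) : ∃ K ψ, IsMartingaleDifference p μ ψ ∧ IsLipschitzInLast K ψ ∧
      ∀ s, eLpNorm (φ s - ψ s) (ENNReal.ofReal p) μ ≤ 2 * ENNReal.ofReal ε := by
  choose K ψ hψm hψL hψ₀ hK hψε using fun s ↦ exists_lipschitz_condExp_eq_zero_eLpNorm_sub_le hp
    s.1 (h.measurable s) (h.memLp s) (h.condExp_eq_zero s) hε
  refine ⟨∑ s, K s, ψ, ⟨hψm, hψL, hψ₀⟩, fun s x y hxy ↦ (hK s x y hxy).trans ?_, hψε⟩
  gcongr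
  exact Finset.single_le_sum (fun _ _ ↦ zero_le) (Finset.mem_univ s)

theorem IsMartingaleDifference.exists_isLipschitzInLast_tendsto_eLpNorm
    {φ : Fin N × Fin d → PathD N d → ℝ} (h : IsMartingaleDifference p μ φ) (hp : 1 ≤ p) :
    ∃ (K : ℕ → ℝ≥0) (ψ : ℕ → Fin N × Fin d → PathD N d → ℝ),
      (∀ k, IsMartingaleDifference p μ (ψ k)) ∧ (∀ k, IsLipschitzInLast (K k) (ψ k)) ∧
      ∀ s, Tendsto (fun k ↦ eLpNorm (ψ k s - φ s) (ENNReal.ofReal p) μ) atTop (𝓝 0) := by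
  choose K ψ hψ hK hψε using fun k : ℕ ↦
    h.exists_isLipschitzInLast_eLpNorm_sub_le hp (Nat.one_div_pos_of_nat (n := k) (α := ℝ))
  refine ⟨K, ψ, hψ, hK, fun s ↦ ?_⟩
  have hlim : Tendsto (fun k : ℕ ↦ 2 * ENNReal.ofReal (1 / ((k : ℝ) + 1))) atTop (𝓝 0) := by
    simpa using ENNReal.Tendsto.const_mul
      (ENNReal.tendsto_ofReal tendsto_one_div_add_atTop_nhds_zero_nat) (.inr ENNReal.ofNat_ne_top)
  refine tendsto_of_tendsto_of_tendsto_of_le_of_le tendsto_const_nhds hlim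
    (fun _ ↦ zero_le) fun k ↦ ?_
  rw [eLpNorm_sub_comm]
  exact hψε k s

theorem exists_isLipschitzInLast_lt_sum_integral_mul (hpq : p.HolderConjugate q)
    {g : Fin N × Fin d → PathD N d → ℝ} (hgm : ∀ s, Measurable[Fn N d (s.1 + 1)] (g s))
    (hg : ∀ s, MemLp (g s) (ENNReal.ofReal q) μ) {κ : ℝ} (hκ : κ < predDist q μ g) :
    ∃ K φ, IsMartingaleDifference p μ φ ∧ IsLipschitzInLast K φ ∧
      ∑ s, ∫ x, |φ s x| ^ p ∂μ ≤ 1 ∧ κ < ∑ s, ∫ x, g s x * φ s x ∂μ := by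
  obtain ⟨φ, hφ, hφ₁, hφg⟩ := exists_isMartingaleDifference_predDist_le hpq hgm hg
  obtain ⟨K, ψ, hψ, hK, hψφ⟩ := hφ.exists_isLipschitzInLast_tendsto_eLpNorm hpq.lt.le
  set A : ℕ → ℝ := fun k ↦ max 1 (∑ s, ∫ x, |ψ k s x| ^ p ∂μ)
  have hA₁ k : 1 ≤ A k := le_max_left _ _
  have hA : Tendsto A atTop (𝓝 1) := by
    have := tendsto_const_nhds (x := (1 : ℝ)).max (tendsto_finsetSum Finset.univ fun s _ ↦
      tendsto_integral_abs_rpow_of_tendsto_eLpNorm hpq.lt.le (fun k ↦ (hψ k).memLp s)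
        (hφ.memLp s) (hψφ s))
    rwa [max_eq_left hφ₁] at this
  have hJ := tendsto_finsetSum Finset.univ fun s _ ↦
    tendsto_integral_mul_of_tendsto_eLpNorm hpq (fun k ↦ (hψ k).memLp s) (hφ.memLp s) (hg s)
      (hψφ s)
  have hlim := (hA.inv₀ one_ne_zero).mul hJ
  rw [inv_one, one_mul] at hlim
  obtain ⟨k, hk⟩ := (hlim.eventually_const_lt (hκ.trans_le hφg)).exists
  refine ⟨⟨(A k)⁻¹, by have := hA₁ k; positivity⟩ * K k, fun s x ↦ (A k)⁻¹ * ψ k s x,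
    (hψ k).const_mul _, (hK k).const_mul _,
    sum_integral_abs_inv_mul_rpow_le_one hpq.lt.le (hA₁ k) (le_max_right _ _), ?_⟩
  simpa only [mul_left_comm (g _ _), integral_const_mul, ← Finset.mul_sum] using hk

end LipschitzApproximation

section ShiftedPaths

/-- The path whose increments are those of `x` shifted by `φ`. -/
def shift {N d : ℕ} (φ : Fin N × Fin d → PathD N d → ℝ) (x : PathD N d) : PathD N d :=
  x + DeltaInv fun i j ↦ φ (i, j) x

variable {N d : ℕ} {μ : Measure (PathD N d)} {φ : Fin N × Fin d → PathD N d → ℝ}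

-- Blackwell's principle: disjoint analytic sets are separated by a Borel set.
theorem comap_le_comap_of_forall_eq {Ω β γ : Type*} [MeasurableSpace Ω] [StandardBorelSpace Ω]
    [TopologicalSpace β] [T2Space β] [SecondCountableTopology β] [mβ : MeasurableSpace β]
    [OpensMeasurableSpace β] [mγ : MeasurableSpace γ] {F : Ω → β} {G : Ω → γ}
    (hF : Measurable F) (hG : Measurable G) (h : ∀ x y, F x = F y → G x = G y) :
    mγ.comap G ≤ mβ.comap F := by
  rintro _ ⟨S, hS, rfl⟩
  have hGS := hG hS
  have hdisj : Disjoint (F '' (G ⁻¹' S)) (F '' (G ⁻¹' S)ᶜ) := by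
    rw [Set.disjoint_left]
    rintro _ ⟨x, hx, rfl⟩ ⟨y, hy, hyx⟩
    exact hy (by rwa [mem_preimage, h y x hyx])
  obtain ⟨u, hu, hdu, hum⟩ := (hGS.analyticSet_image hF).measurablySeparable
    (hGS.compl.analyticSet_image hF) hdisj
  refine ⟨u, hum, Subset.antisymm (fun x hx ↦ ?_) (image_subset_iff.1 hu)⟩
  by_contra hxS
  exact Set.disjoint_left.1 hdu ⟨x, hxS, rfl⟩ hx

theorem trunc_eq_trunc_iff_inc {n : ℕ} {x y : PathD N d} :
    trunc n x = trunc n y ↔ ∀ s : Fin N × Fin d, (s.1 : ℕ) < n → inc s x = inc s y := by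
  refine ⟨fun h s hs ↦ ?_, fun h ↦ funext fun k ↦ ?_⟩
  · have hinc := (measurable_Fn_inc s).mono (Fn_mono (Nat.succ_le_of_lt hs)) le_rfl
    rw [← apply_trunc_of_measurable_Fn hinc x, h, apply_trunc_of_measurable_Fn hinc y]
  · simp only [trunc]
    split_ifs with hk
    · funext j
      rw [← sum_ite_inc x, ← sum_ite_inc y]
      refine Finset.sum_congr rfl fun i _ ↦ ?_
      split_ifs with hi
      · exact h (i, j) (by simp only; omega)
      · rfl
    · rfl

theorem inc_sub_inc_of_trunc_eq {i : Fin N} {x y : PathD N d} (h : trunc i x = trunc i y)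
    (j : Fin d) : inc (i, j) x - inc (i, j) y = x i j - y i j := by
  have hcoord : coord x i = coord y i := by
    rw [← coord_trunc le_rfl x, h, coord_trunc le_rfl y]
  simp only [inc_apply, coord_succ, hcoord]
  ring

theorem IsLipschitzInLast.apply_eq_of_inc_add_eq {K : ℝ≥0} (hφ : IsLipschitzInLast K φ)
    (hK : K < 1) {i : Fin N} {x y : PathD N d} (h : trunc i x = trunc i y)
    (hadd : ∀ j, inc (i, j) x + φ (i, j) x = inc (i, j) y + φ (i, j) y) (j : Fin d) :
    inc (i, j) x = inc (i, j) y := by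
  have hle : ‖x i - y i‖ ≤ K * ‖x i - y i‖ := by
    refine (pi_norm_le_iff_of_nonneg (by positivity)).2 fun k ↦ ?_
    have hφk : x i k - y i k = φ (i, k) y - φ (i, k) x := by
      linarith [inc_sub_inc_of_trunc_eq h k, hadd k]
    rw [Pi.sub_apply, hφk, Real.norm_eq_abs, abs_sub_comm]
    exact hφ (i, k) x y h
  have hzero : ‖x i - y i‖ ≤ 0 := by
    have : (K : ℝ) < 1 := hK
    nlinarith [norm_nonneg (x i - y i)]
  have hxy : x i = y i := sub_eq_zero.1 (norm_le_zero_iff.1 hzero)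
  rw [← sub_eq_zero, inc_sub_inc_of_trunc_eq h j, hxy, sub_self]

theorem inc_shift (s : Fin N × Fin d) (x : PathD N d) :
    inc s (shift φ x) = inc s x + φ s x := by
  rw [shift, map_add, inc_DeltaInv]

theorem inc_shift_sub (s : Fin N × Fin d) (x : PathD N d) : inc s (shift φ x - x) = φ s x := by
  rw [map_sub, inc_shift, add_sub_cancel_left]

theorem measurable_shift (hφ : ∀ s, Measurable (φ s)) : Measurable (shift φ) := by
  refine measurable_id.add (measurable_pi_lambda _ fun i ↦ ?_)
  refine Finset.measurable_sum _ fun k _ ↦ ?_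
  split_ifs
  · exact measurable_pi_lambda _ fun j ↦ hφ (k, j)
  · exact measurable_const

theorem integrable_shift (hμ : Integrable id μ) (hφ : ∀ s, Integrable (φ s) μ) :
    Integrable (shift φ) μ := by
  refine hμ.add (.of_eval fun i ↦ integrable_finsetSum _ fun k _ ↦ ?_)
  split_ifs
  · exact .of_eval fun j ↦ hφ (k, j)
  · exact integrable_zero _ _ _

theorem trunc_shift_eq_iff {K : ℝ≥0} (hφm : ∀ s, Measurable[Fn N d (s.1 + 1)] (φ s))
    (hφ : IsLipschitzInLast K φ) (hK : K < 1) {n : ℕ} {x y : PathD N d} :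
    trunc n (shift φ x) = trunc n (shift φ y) ↔ trunc n x = trunc n y := by
  simp only [trunc_eq_trunc_iff_inc (n := n), inc_shift]
  refine ⟨fun h ↦ ?_, fun h s hs ↦ ?_⟩
  · suffices ∀ m ≤ n, trunc m x = trunc m y from trunc_eq_trunc_iff_inc.1 (this n le_rfl)
    intro m
    induction m with
    | zero => exact fun _ ↦ trunc_eq_trunc_iff_inc.2 fun s hs ↦ absurd hs (Nat.not_lt_zero _)
    | succ m ih =>
      refine fun hm ↦ trunc_eq_trunc_iff_inc.2 fun s hs ↦ ?_
      have hxy := ih (by omega)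
      rcases (Nat.lt_succ_iff.1 hs).lt_or_eq with hsm | rfl
      · exact trunc_eq_trunc_iff_inc.1 hxy s hsm
      · exact hφ.apply_eq_of_inc_add_eq hK hxy (fun j ↦ h (s.1, j) hm) s.2
  · have hφs := (hφm s).mono (Fn_mono (Nat.succ_le_of_lt hs)) le_rfl
    rw [h s hs, ← apply_trunc_of_measurable_Fn hφs x, trunc_eq_trunc_iff_inc.2 h,
      apply_trunc_of_measurable_Fn hφs y]

theorem comap_shift_Fn {K : ℝ≥0} (hφm : ∀ s, Measurable[Fn N d (s.1 + 1)] (φ s))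
    (hφ : IsLipschitzInLast K φ) (hK : K < 1) (n : ℕ) :
    (Fn N d n).comap (shift φ) = Fn N d n := by
  have hT := measurable_trunc (N := N) (d := d) n
  have hTs := hT.comp (measurable_shift fun s ↦ (hφm s).mono (Fn_le _) le_rfl)
  rw [show Fn N d n = MeasurableSpace.comap (trunc n) inferInstance from rfl,
    MeasurableSpace.comap_comp]
  exact le_antisymm
    (comap_le_comap_of_forall_eq hT hTs fun x y ↦ (trunc_shift_eq_iff hφm hφ hK).2)
    (comap_le_comap_of_forall_eq hTs hT fun x y ↦ (trunc_shift_eq_iff hφm hφ hK).1)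

end ShiftedPaths

section GraphCoupling

variable {N d : ℕ} {μ : Measure (PathD N d)} {T : PathD N d → PathD N d}

theorem isBicausalCoupling_map_graph [IsFiniteMeasure μ] (hT : Measurable T)
    (hTF : ∀ n, (Fn N d n).comap T = Fn N d n) :
    IsBicausalCoupling μ ((μ.map fun x ↦ (x, T x)).map Prod.snd) (μ.map fun x ↦ (x, T x)) := by
  have hG : Measurable fun x ↦ (x, T x) := measurable_id.prodMk hT
  have hae (S : Set (PathD N d)) :
      Prod.snd ⁻¹' S =ᵐ[μ.map fun x ↦ (x, T x)] Prod.fst ⁻¹' (T ⁻¹' S) := by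
    have hm : MeasurableSet {z : PathD N d × PathD N d | z.2 = T z.1} :=
      measurableSet_eq_fun measurable_snd (hT.comp measurable_fst)
    filter_upwards [(ae_map_iff hG.aemeasurable hm).2 (ae_of_all _ fun _ ↦ rfl)] with z hz
    exact congrArg S hz
  refine ⟨⟨rfl, ?_, fun n ↦ ?_⟩, fun n ↦ ?_⟩
  · rw [Measure.map_map measurable_fst hG]
    exact Measure.map_id
  · refine .of_forall_exists_ae_eq (comap_Fn_le measurable_fst n) (comap_Fn_le measurable_fst N) ?_
    rintro _ ⟨S, hS, rfl⟩
    exact ⟨_, ⟨T ⁻¹' S, hTF n ▸ ⟨S, hS, rfl⟩, rfl⟩, hae S⟩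
  · refine .of_forall_exists_ae_eq (comap_Fn_le measurable_snd n) (comap_Fn_le measurable_snd N) ?_
    rintro _ ⟨S, hS, rfl⟩
    rw [← hTF n] at hS
    obtain ⟨S, hS, rfl⟩ := hS
    exact ⟨_, ⟨S, hS, rfl⟩, (hae S).symm⟩

theorem IsMartingaleMeasure.map [IsFiniteMeasure μ] (hT : Measurable T)
    (hTF : ∀ n, (Fn N d n).comap T = Fn N d n) (hint : Integrable T μ)
    (hinc : ∀ s : Fin N × Fin d, μ[fun x ↦ inc s (T x) | Fn N d s.1] =ᵐ[μ] 0) :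
    IsMartingaleMeasure (μ.map T) := by
  have hid : Integrable id (μ.map T) :=
    (integrable_map_measure aestronglyMeasurable_id hT.aemeasurable).2 hint
  refine .of_condExp_inc hid fun s ↦ ?_
  have hzero := condExp_comp_ae_eq_of_measurePreserving ⟨hT, rfl⟩ (Fn_le s.1)
    ((inc s).integrable_comp hid)
  rw [hTF] at hzero
  have hm : Measurable (μ.map T)[inc s | Fn N d s.1] :=
    stronglyMeasurable_condExp.measurable.mono (Fn_le _) le_rfl
  exact (ae_map_iff hT.aemeasurable (measurableSet_eq_fun hm measurable_const)).2
    (hzero.symm.trans (hinc s))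

end GraphCoupling

namespace IsMartingaleDifference

variable {N d : ℕ} {p : ℝ} {μ : Measure (PathD N d)} {φ : Fin N × Fin d → PathD N d → ℝ}

theorem measurable_prodMk_shift (h : IsMartingaleDifference p μ φ) :
    Measurable fun x ↦ (x, shift φ x) :=
  measurable_id.prodMk (measurable_shift fun s ↦ (h.measurable s).mono (Fn_le _) le_rfl)

theorem integrable_cN_map_shift (h : IsMartingaleDifference p μ φ) (hp : 0 < p) :
    Integrable (fun z ↦ cN p z.1 z.2) (μ.map fun x ↦ (x, shift φ x)) := by
  have hcont : Continuous fun z : PathD N d × PathD N d ↦ ∑ s, |inc s (z.2 - z.1)| ^ p := by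
    refine continuous_finsetSum _ fun s _ ↦ Continuous.rpow_const (by fun_prop) fun _ ↦ .inr hp.le
  simp only [cN_eq_sum_abs_inc_rpow hp.ne']
  rw [integrable_map_measure hcont.aestronglyMeasurable h.measurable_prodMk_shift.aemeasurable]
  simp only [Function.comp_def, inc_shift_sub]
  exact integrable_finsetSum _ fun s _ ↦ integrable_abs_rpow_of_memLp_ofReal hp (h.memLp s)

theorem costD_map_shift (h : IsMartingaleDifference p μ φ) (hp : 0 < p) :
    costD p (μ.map fun x ↦ (x, shift φ x)) = ∑ s, ∫ x, |φ s x| ^ p ∂μ := by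
  rw [costD_eq_sum hp (h.integrable_cN_map_shift hp)]
  refine Finset.sum_congr rfl fun s _ ↦ ?_
  have hcont : Continuous fun z : PathD N d × PathD N d ↦ |inc s (z.2 - z.1)| ^ p :=
    Continuous.rpow_const (by fun_prop) fun _ ↦ .inr hp.le
  rw [integral_map h.measurable_prodMk_shift.aemeasurable hcont.aestronglyMeasurable]
  simp only [inc_shift_sub]

theorem isCompetitor_map_shift [IsProbabilityMeasure μ] {K : ℝ≥0}
    (h : IsMartingaleDifference p μ φ) (hp : 1 ≤ p) (hφ : IsLipschitzInLast K φ) (hK : K < 1)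
    (hmart : IsMartingaleMeasure μ) (hμ : Integrable id μ) :
    IsCompetitor p μ (μ.map fun x ↦ (x, shift φ x)) := by
  have hT := measurable_shift fun s ↦ (h.measurable s).mono (Fn_le _) le_rfl
  have hTF := comap_shift_Fn h.measurable hφ hK
  have hφi s := integrable_of_memLp_ofReal hp (h.memLp s)
  refine ⟨Measure.isProbabilityMeasure_map h.measurable_prodMk_shift.aemeasurable,
    isBicausalCoupling_map_graph hT hTF, ?_, h.integrable_cN_map_shift (by linarith)⟩
  rw [Measure.map_map measurable_snd h.measurable_prodMk_shift]
  change IsMartingaleMeasure (μ.map (shift φ))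
  refine .map hT hTF (integrable_shift hμ hφi) fun s ↦ ?_
  simp only [inc_shift]
  filter_upwards [condExp_add (hmart.integrable_inc s) (hφi s) (Fn N d s.1), hmart.condExp_inc s,
    h.condExp_eq_zero s] with x hadd hinc hzero
  exact hadd.trans (by simp [hinc, hzero])

theorem sum_integral_Dn_mul_inc_map_shift [IsFiniteMeasure μ] {q : ℝ} {f : PathD N d → ℝ}
    (h : IsMartingaleDifference p μ φ) (hpq : p.HolderConjugate q) (hf : ContDiff ℝ 1 f)
    (hD : ∀ s : Fin N × Fin d, MemLp (fun x ↦ Dn f (s.1 + 1) x s.2) (ENNReal.ofReal q) μ) :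
    ∑ s : Fin N × Fin d, ∫ z, Dn f (s.1 + 1) z.1 s.2 * inc s (z.2 - z.1)
        ∂(μ.map fun x ↦ (x, shift φ x))
      = ∑ s, ∫ x, optProj μ f s x * φ s x ∂μ := by
  refine Finset.sum_congr rfl fun s _ ↦ ?_
  have hcont : Continuous fun z : PathD N d × PathD N d ↦
      Dn f (s.1 + 1) z.1 s.2 * inc s (z.2 - z.1) :=
    (((continuous_apply s.2).comp (continuous_Dn hf _)).comp continuous_fst).mul (by fun_prop)
  rw [integral_map h.measurable_prodMk_shift.aemeasurable hcont.aestronglyMeasurable]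
  simp only [inc_shift_sub]
  exact integral_Dn_mul_eq_integral_optProj_mul hpq hD (h.measurable s) (h.memLp s)

end IsMartingaleDifference

section Penalty

variable {L : ℝ → ℝ≥0∞}

theorem coe_sub_coe_ennreal {l : ℝ≥0∞} (hl : l ≠ ⊤) (v : ℝ) :
    (v : EReal) - (l : EReal) = ((v - l.toReal : ℝ) : EReal) := by
  rw [← EReal.coe_ennreal_toReal hl, EReal.coe_sub]

theorem le_Lconj {u : ℝ} (hu : 0 ≤ u) (hLu : L u ≠ ⊤) (v : ℝ) :
    ((u * v - (L u).toReal : ℝ) : EReal) ≤ Lconj L v := by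
  rw [← coe_sub_coe_ennreal hLu]
  exact le_iSup (fun u : {u : ℝ // 0 ≤ u} ↦ ((u.1 * v : ℝ) : EReal) - (L u.1 : EReal)) ⟨u, hu⟩

theorem exists_lt_of_lt_Lconj {a v : ℝ} (h : (a : EReal) < Lconj L v) :
    ∃ u, 0 ≤ u ∧ L u ≠ ⊤ ∧ a < u * v - (L u).toReal := by
  obtain ⟨⟨u, hu⟩, hau⟩ := lt_iSup_iff.1 h
  have hLu : L u ≠ ⊤ := fun htop ↦ by simp [htop] at hau
  exact ⟨u, hu, hLu, EReal.coe_lt_coe_iff.1 (coe_sub_coe_ennreal hLu _ ▸ hau)⟩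

theorem eventually_mul_rpow_le_toReal {p : ℝ}
    (hL : Tendsto (fun u ↦ L u / ENNReal.ofReal (u ^ p)) atTop (𝓝 ⊤)) (M : ℝ) :
    ∀ᶠ u in atTop, L u ≠ ⊤ → M * u ^ p ≤ (L u).toReal := by
  filter_upwards [hL.eventually (lt_mem_nhds (ENNReal.ofReal_lt_top (r := M))),
    eventually_gt_atTop 0] with u hMu hu hLu
  have hup := Real.rpow_pos_of_pos hu p
  have hle := hMu.le
  rw [ENNReal.le_div_iff_mul_le (.inl (ENNReal.ofReal_pos.2 hup).ne') (.inl ENNReal.ofReal_ne_top),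
    ← ENNReal.ofReal_mul' hup.le] at hle
  exact (ENNReal.ofReal_le_iff_le_toReal hLu).1 hle

theorem eventually_mul_add_mul_rpow_sub_le {p : ℝ} (hp : 1 ≤ p)
    (hL : Tendsto (fun u ↦ L u / ENNReal.ofReal (u ^ p)) atTop (𝓝 ⊤)) (c K B : ℝ) :
    ∀ᶠ u in atTop, L u ≠ ⊤ → c * u + K * u ^ p - (L u).toReal ≤ B := by
  filter_upwards [eventually_mul_rpow_le_toReal hL (|c| + K + |B|), eventually_ge_atTop 1]
    with u hMu hu hLu
  have hup : u ≤ u ^ p := Real.self_le_rpow_of_one_le hu hp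
  have hc : c * u ≤ |c| * u ^ p := by gcongr; exact le_abs_self c
  have hB : |B| * 1 ≤ |B| * u ^ p := by gcongr; exact hu.trans hup
  linarith [hMu hLu, neg_abs_le B]

theorem exists_pos_eventually_mul_add_mul_rpow_sub_le {p v B : ℝ} (hp : 1 < p)
    (hB : Lconj L v < B) (U : ℝ) :
    ∃ ε > 0, ∀ K ≥ 0, ∀ᶠ δ : ℝ in 𝓝[>] 0, ∀ u, 0 ≤ u → u ≤ U → L u ≠ ⊤ →
      (v + ε) * u + K * δ ^ (p - 1) * u ^ p - (L u).toReal ≤ B := by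
  obtain ⟨B', hvB', hB'⟩ := EReal.lt_iff_exists_real_btwn.1 hB
  have hBB' : 0 < B - B' := sub_pos.2 (EReal.coe_lt_coe_iff.1 hB')
  have hU : (0 : ℝ) < 1 + |U| := by positivity
  refine ⟨(B - B') / (2 * (1 + |U|)), by positivity, fun K hK ↦ ?_⟩
  have hlim : Tendsto (fun δ : ℝ ↦ K * δ ^ (p - 1) * |U| ^ p) (𝓝[>] 0) (𝓝 0) := by
    have hcont : Continuous fun δ : ℝ ↦ K * δ ^ (p - 1) * |U| ^ p :=
      (continuous_const.mul (Real.continuous_rpow_const (by linarith))).mul continuous_const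
    simpa [Real.zero_rpow (sub_pos.2 hp).ne'] using (hcont.tendsto 0).mono_left nhdsWithin_le_nhds
  filter_upwards [hlim.eventually (gt_mem_nhds (half_pos hBB')), self_mem_nhdsWithin]
    with δ hδK hδ u hu huU hLu
  have hδ₀ : (0 : ℝ) < δ := hδ
  have hlin : (B - B') / (2 * (1 + |U|)) * u ≤ (B - B') / 2 := by
    rw [div_mul_eq_mul_div, div_le_div_iff₀ (by positivity) two_pos]
    nlinarith [le_abs_self U, hU]
  have hpow : K * δ ^ (p - 1) * u ^ p ≤ K * δ ^ (p - 1) * |U| ^ p := by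
    gcongr
    exact huU.trans (le_abs_self U)
  have hconj := EReal.coe_le_coe_iff.1 ((le_Lconj hu hLu v).trans hvB'.le)
  linarith

theorem mul_rpow_eq_mul_rpow_sub_one_mul {p δ u : ℝ} (hδ : 0 < δ) (hu : 0 ≤ u) :
    (δ * u) ^ p = δ * (δ ^ (p - 1) * u ^ p) := by
  have hδ₀ := hδ.ne'
  rw [Real.mul_rpow hδ.le hu, Real.rpow_sub_one hδ₀, ← mul_assoc, mul_div_cancel₀ _ hδ₀]

-- In the variable `u = r i / δ` only bounded `u` matter, since `L` dominates `u ^ p` at infinity.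
theorem eventually_forall_sub_penalty_le {ι : Type*} {p v E B : ℝ} (hp : 1 < p)
    (hL : Tendsto (fun u ↦ L u / ENNReal.ofReal (u ^ p)) atTop (𝓝 ⊤)) (hB : Lconj L v < B)
    {r F : ι → ℝ} (hr : ∀ i, 0 ≤ r i)
    (hF : ∀ ε > 0, ∃ K ≥ 0, ∀ i, F i ≤ E + (v + ε) * r i + K * r i ^ p) :
    ∀ᶠ δ : ℝ in 𝓝[>] 0, ∀ i,
      (F i : EReal) - ((ENNReal.ofReal δ * L (r i / δ) : ℝ≥0∞) : EReal)
        ≤ ((E + δ * B : ℝ) : EReal) := by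
  obtain ⟨K₁, hK₁, hF₁⟩ := hF 1 one_pos
  obtain ⟨U, hU⟩ := eventually_atTop.1 (eventually_mul_add_mul_rpow_sub_le hp.le hL (v + 1) K₁ B)
  obtain ⟨ε, hε, hnear⟩ := exists_pos_eventually_mul_add_mul_rpow_sub_le hp hB U
  obtain ⟨K, hK, hFε⟩ := hF ε hε
  filter_upwards [hnear K hK, nhdsWithin_le_nhds (gt_mem_nhds one_pos), self_mem_nhdsWithin]
    with δ hnear hδ₁ hδ i
  have hδ₀ : 0 < δ := hδ
  obtain ⟨u, hu⟩ : ∃ u, r i = δ * u := ⟨r i / δ, by field_simp⟩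
  have hu₀ : 0 ≤ u := nonneg_of_mul_nonneg_right (hu ▸ hr i) hδ₀
  rw [hu, mul_div_cancel_left₀ _ hδ₀.ne']
  by_cases hLu : L u = ⊤
  · rw [hLu, ENNReal.mul_top (ENNReal.ofReal_pos.2 hδ₀).ne']
    simp
  rw [coe_sub_coe_ennreal (ENNReal.mul_ne_top ENNReal.ofReal_ne_top hLu),
    ENNReal.toReal_ofReal_mul _ _ hδ₀.le, EReal.coe_le_coe_iff]
  have hδp : δ ^ (p - 1) ≤ 1 := Real.rpow_le_one hδ₀.le hδ₁.le (sub_pos.2 hp).le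
  rcases le_total U u with hUu | huU
  · have hfar : (v + 1) * u + K₁ * δ ^ (p - 1) * u ^ p - (L u).toReal ≤ B := by
      refine le_trans ?_ (hU u hUu hLu)
      gcongr
      exact mul_le_of_le_one_right hK₁ hδp
    have hFi := hF₁ i
    rw [hu, mul_rpow_eq_mul_rpow_sub_one_mul hδ₀ hu₀] at hFi
    linarith [mul_le_mul_of_nonneg_left hfar hδ₀.le]
  · have hFi := hFε i
    rw [hu, mul_rpow_eq_mul_rpow_sub_one_mul hδ₀ hu₀] at hFi
    linarith [mul_le_mul_of_nonneg_left (hnear u hu₀ huU hLu) hδ₀.le]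

theorem tendsto_one_div_mul_sub_nhdsGT {V : ℝ → EReal} {v₀ : ℝ} {ℓ : EReal}
    (hlower : ∀ a : ℝ, a < ℓ → ∀ᶠ δ in 𝓝[>] 0, ((v₀ + δ * a : ℝ) : EReal) ≤ V δ)
    (hupper : ∀ b : ℝ, ℓ < b → ∀ᶠ δ in 𝓝[>] 0, V δ ≤ ((v₀ + δ * b : ℝ) : EReal)) :
    Tendsto (fun δ : ℝ ↦ ((1 / δ : ℝ) : EReal) * (V δ - (v₀ : EReal))) (𝓝[>] 0) (𝓝 ℓ) := by
  have hquot {δ : ℝ} (hδ : 0 < δ) (c : ℝ) :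
      ((1 / δ : ℝ) : EReal) * (((v₀ + δ * c : ℝ) : EReal) - (v₀ : EReal)) = (c : EReal) := by
    rw [← EReal.coe_sub, ← EReal.coe_mul, add_sub_cancel_left, one_div,
      inv_mul_cancel_left₀ hδ.ne']
  have hmono {δ : ℝ} (hδ : 0 < δ) {x y : EReal} (hxy : x ≤ y) :
      ((1 / δ : ℝ) : EReal) * (x - (v₀ : EReal)) ≤ ((1 / δ : ℝ) : EReal) * (y - (v₀ : EReal)) :=
    mul_le_mul_of_nonneg_left (EReal.sub_le_sub hxy le_rfl)
      (EReal.coe_nonneg.2 (one_div_nonneg.2 hδ.le))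
  refine tendsto_order.2 ⟨fun a ha ↦ ?_, fun b hb ↦ ?_⟩
  · obtain ⟨a', haa', ha'⟩ := EReal.lt_iff_exists_real_btwn.1 ha
    filter_upwards [hlower a' ha', self_mem_nhdsWithin] with δ hV hδ
    exact haa'.trans_le ((hquot hδ a').ge.trans (hmono hδ hV))
  · obtain ⟨b', hb', hbb'⟩ := EReal.lt_iff_exists_real_btwn.1 hb
    filter_upwards [hupper b' hb', self_mem_nhdsWithin] with δ hV hδ
    exact ((hmono hδ hV).trans (hquot hδ b').le).trans_lt hbb'

end Penalty

section Sensitivity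

variable {N d : ℕ} {p q : ℝ} {L : ℝ → ℝ≥0∞} {μ : Measure (PathD N d)} [IsProbabilityMeasure μ]
  {f : PathD N d → ℝ}

theorem eventually_VMartD_le (hpq : p.HolderConjugate q)
    (hL : Tendsto (fun u ↦ L u / ENNReal.ofReal (u ^ p)) atTop (𝓝 ⊤))
    (hmart : IsMartingaleMeasure μ) (hμ : MemLp id (ENNReal.ofReal p) μ) (hf : HasGrowth p f)
    {b : ℝ} (hb : Lconj L (predDist q μ (optProj μ f)) < b) :
    ∀ᶠ δ in 𝓝[>] 0, VMartD p L μ f δ ≤ ((∫ x, f x ∂μ + δ * b : ℝ) : EReal) := by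
  have hsub := eventually_forall_sub_penalty_le (ι := {π // IsCompetitor p μ π})
    (r := fun π ↦ costD p π.1 ^ (1 / p)) (F := fun π ↦ ∫ z, f z.2 ∂π.1) (E := ∫ x, f x ∂μ) hpq.lt hL
    hb (fun π ↦ Real.rpow_nonneg (costD_nonneg hpq.ne_zero) _) fun ε hε ↦ ?_
  · filter_upwards [hsub] with δ hδ
    exact iSup_le hδ
  obtain ⟨K, hK, hexp⟩ := hf.exists_abs_integral_sub_sub_sum_le hpq hμ hε
  refine ⟨K, hK, fun ⟨π, hπ⟩ ↦ ?_⟩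
  have := hπ.isProbabilityMeasure
  have hrem := (abs_le.1 (hexp π hπ.measurePreserving_fst hπ.integrable_cN)).2
  have hlin := hπ.sum_integral_Dn_mul_inc_le hmart hpq hμ hf.contDiff (hf.memLp_Dn hpq hμ)
  rw [← Real.rpow_mul (costD_nonneg hpq.ne_zero), one_div_mul_cancel hpq.ne_zero, Real.rpow_one]
  linarith

theorem eventually_exists_isCompetitor_mul_le_sum_integral (hpq : p.HolderConjugate q)
    (hmart : IsMartingaleMeasure μ) (hμ : Integrable id μ) (hf : ContDiff ℝ 1 f)
    (hD : ∀ s : Fin N × Fin d, MemLp (fun x ↦ Dn f (s.1 + 1) x s.2) (ENNReal.ofReal q) μ)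
    {κ : ℝ} (hκ : κ < predDist q μ (optProj μ f)) :
    ∀ᶠ t : ℝ in 𝓝[≥] 0, ∃ π, IsCompetitor p μ π ∧ costD p π ≤ t ^ p ∧
      t * κ ≤ ∑ s : Fin N × Fin d, ∫ z, Dn f (s.1 + 1) z.1 s.2 * inc s (z.2 - z.1) ∂π := by
  obtain ⟨K, φ, hφ, hLip, hnorm, hκφ⟩ := exists_isLipschitzInLast_lt_sum_integral_mul hpq
    measurable_optProj (memLp_optProj hpq.symm.lt.le hD) hκ
  have hK : ∀ᶠ t : ℝ in 𝓝[≥] 0, t * K < 1 := by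
    have hcont : Continuous fun t : ℝ ↦ t * K := by fun_prop
    exact nhdsWithin_le_nhds (hcont.continuousAt.eventually_lt continuousAt_const (by simp))
  filter_upwards [hK, self_mem_nhdsWithin] with t htK ht
  lift t to ℝ≥0 using ht
  have htφ := hφ.const_mul t
  refine ⟨_, htφ.isCompetitor_map_shift hpq.lt.le (hLip.const_mul t) (mod_cast htK) hmart hμ,
    ?_, ?_⟩
  · rw [htφ.costD_map_shift hpq.pos]
    simp only [abs_mul, NNReal.abs_eq, Real.mul_rpow t.coe_nonneg (abs_nonneg _),
      integral_const_mul, ← Finset.mul_sum]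
    exact mul_le_of_le_one_right (by positivity) hnorm
  · rw [htφ.sum_integral_Dn_mul_inc_map_shift hpq hf hD]
    simp only [mul_left_comm _ (t : ℝ), integral_const_mul, ← Finset.mul_sum]
    gcongr

theorem eventually_exists_isCompetitor_add_mul_le_integral (hpq : p.HolderConjugate q)
    (hmart : IsMartingaleMeasure μ) (hμ : MemLp id (ENNReal.ofReal p) μ) (hf : HasGrowth p f)
    {κ : ℝ} (hκ : κ < predDist q μ (optProj μ f)) :
    ∀ᶠ t : ℝ in 𝓝[≥] 0, ∃ π, IsCompetitor p μ π ∧ costD p π ^ (1 / p) ≤ t ∧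
      ∫ x, f x ∂μ + t * κ ≤ ∫ z, f z.2 ∂π := by
  obtain ⟨κ', hκκ', hκ'⟩ := exists_between hκ
  obtain ⟨K, hK, hexp⟩ :=
    hf.exists_abs_integral_sub_sub_sum_le hpq hμ (half_pos (sub_pos.2 hκκ'))
  have hKt : ∀ᶠ t : ℝ in 𝓝[≥] 0, K * t ^ (p - 1) < (κ' - κ) / 2 := by
    have hcont : Continuous fun t : ℝ ↦ K * t ^ (p - 1) :=
      continuous_const.mul (Real.continuous_rpow_const hpq.sub_one_pos.le)
    refine nhdsWithin_le_nhds (hcont.continuousAt.eventually_lt continuousAt_const ?_)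
    simpa [Real.zero_rpow hpq.sub_one_pos.ne'] using hκκ'
  filter_upwards [hKt, self_mem_nhdsWithin, eventually_exists_isCompetitor_mul_le_sum_integral hpq
    hmart (hμ.integrable (ENNReal.one_le_ofReal.2 hpq.lt.le)) hf.contDiff (hf.memLp_Dn hpq hμ) hκ']
    with t hKt ht ⟨π, hπ, hcost, hlin⟩
  have ht₀ : 0 ≤ t := ht
  have hroot : costD p π ^ (1 / p) ≤ t := by
    rw [one_div]
    exact (Real.rpow_inv_le_iff_of_pos (costD_nonneg hpq.ne_zero) ht₀ hpq.pos).2 hcost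
  refine ⟨π, hπ, hroot, ?_⟩
  have := hπ.isProbabilityMeasure
  have hrem := (abs_le.1 (hexp π hπ.measurePreserving_fst hπ.integrable_cN)).1
  have htp : t ^ p = t * t ^ (p - 1) := by
    rw [← Real.rpow_one_add' ht₀ (by simpa using hpq.ne_zero), add_sub_cancel]
  have hKcost : K * costD p π ≤ t * (K * t ^ (p - 1)) := by
    rw [mul_left_comm, ← htp]
    gcongr
  have hroot' := mul_le_mul_of_nonneg_left hroot (half_pos (sub_pos.2 hκκ')).le
  linarith [mul_le_mul_of_nonneg_left hKt.le ht₀]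

theorem eventually_le_VMartD (hpq : p.HolderConjugate q) (hL : MonotoneOn L (Ici 0))
    (hmart : IsMartingaleMeasure μ) (hμ : MemLp id (ENNReal.ofReal p) μ) (hf : HasGrowth p f)
    {a : ℝ} (ha : (a : EReal) < Lconj L (predDist q μ (optProj μ f))) :
    ∀ᶠ δ in 𝓝[>] 0, ((∫ x, f x ∂μ + δ * a : ℝ) : EReal) ≤ VMartD p L μ f δ := by
  obtain ⟨u, hu, hLu, hau⟩ := exists_lt_of_lt_Lconj ha
  obtain ⟨κ, haκ, hκ⟩ : ∃ κ, a < u * κ - (L u).toReal ∧ κ < predDist q μ (optProj μ f) := by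
    have hcont : Continuous fun κ : ℝ ↦ u * κ - (L u).toReal := by fun_prop
    exact (((continuousAt_const.eventually_lt hcont.continuousAt hau).filter_mono
      nhdsWithin_le_nhds).and (self_mem_nhdsWithin (s := Iio _))).exists
  have hδu : Tendsto (fun δ ↦ δ * u) (𝓝[>] 0) (𝓝[≥] 0) := by
    refine tendsto_nhdsWithin_iff.2 ⟨?_, ?_⟩
    · simpa using ((continuous_mul_const u).tendsto 0).mono_left nhdsWithin_le_nhds
    · filter_upwards [self_mem_nhdsWithin] with δ hδ using mul_nonneg (le_of_lt hδ) hu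
  filter_upwards [hδu.eventually
    (eventually_exists_isCompetitor_add_mul_le_integral hpq hmart hμ hf hκ),
    self_mem_nhdsWithin] with δ ⟨π, hπ, hcost, hint⟩ hδ
  have hδ₀ : 0 < δ := hδ
  have hLr : L (costD p π ^ (1 / p) / δ) ≤ L u :=
    hL (div_nonneg (Real.rpow_nonneg (costD_nonneg hpq.ne_zero) _) hδ₀.le) hu
      ((div_le_iff₀' hδ₀).2 hcost)
  refine le_trans ?_ (le_iSup (fun π : {π // IsCompetitor p μ π} ↦
    ((∫ z, f z.2 ∂π.1 : ℝ) : EReal) -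
      ((ENNReal.ofReal δ * L (costD p π.1 ^ (1 / p) / δ) : ℝ≥0∞) : EReal)) ⟨π, hπ⟩)
  rw [coe_sub_coe_ennreal (ENNReal.mul_ne_top ENNReal.ofReal_ne_top (ne_top_of_le_ne_top hLu hLr)),
    ENNReal.toReal_ofReal_mul _ _ hδ₀.le, EReal.coe_le_coe_iff]
  have hpen := mul_le_mul_of_nonneg_left (ENNReal.toReal_mono hLu hLr) hδ₀.le
  linarith [mul_le_mul_of_nonneg_left haκ.le hδ₀.le]

end Sensitivity

theorem statement_11_general {N d : ℕ} (p q : ℝ) (hp : 1 < p) (hq : q = p / (p - 1))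
    (L : ℝ → ℝ≥0∞) (hLmono : MonotoneOn L (Ici 0))
    (hLgrowth : Tendsto (fun u ↦ L u / ENNReal.ofReal (u ^ p)) atTop (𝓝 ⊤))
    (μ : Measure (PathD N d)) [IsProbabilityMeasure μ] (hmart : IsMartingaleMeasure μ)
    (hmom : Integrable (fun x : PathD N d ↦ ‖x‖ ^ p) μ)
    (f : PathD N d → ℝ) (hf : ContDiff ℝ 1 f)
    (C : ℝ) (hgrow : ∀ n : ℕ, ∀ x : PathD N d,
      lpnorm q (Dn f n x) ≤ C * (1 + ‖x‖ ^ (p - 1))) :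
    Tendsto (fun δ : ℝ ↦
        ((1 / δ : ℝ) : EReal) * (VMartD p L μ f δ - ((∫ x, f x ∂μ : ℝ) : EReal)))
      (𝓝[>] 0)
      (𝓝 (Lconj L
        (⨅ h : {h : ℕ → PathD N d → Fin d → ℝ // IsPredictable h ∧
            ∀ n : ℕ, 1 ≤ n → n ≤ N → Integrable (fun x ↦ lpnorm q (h n x) ^ q) μ},
          (∑ n ∈ Finset.Icc 1 N,
            ∫ x, lpnorm q ((μ[Dn f n | Fn N d n]) x - h.1 n x) ^ q ∂μ) ^ (1 / q)))) := by
  have hpq : p.HolderConjugate q := (Real.holderConjugate_iff_eq_conjExponent hp).2 hq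
  have hμ := memLp_id_of_integrable_norm_rpow hpq.pos hmom
  have hfg := hasGrowth_of_lpnorm_Dn_le hpq.symm.pos hf hgrow
  rw [iInf_isPredictable_eq_predDist hpq.symm.lt.le (hfg.memLp_Dn hpq hμ)]
  exact tendsto_one_div_mul_sub_nhdsGT
    (fun a ha ↦ eventually_le_VMartD hpq hLmono hmart hμ hfg ha)
    (fun b hb ↦ eventually_VMartD_le hpq hLgrowth hmart hμ hfg hb)

/-- Discrete-time sensitivity under the martingale constraint:
`lim_{δ→0+} (V_Mart(δ) − V_Mart(0))/δ = L*(inf_{h ∈ H} ‖ᵒ𝔻f − h‖_{L^q(μ)})`, the infimum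
being over predictable processes `h` with `‖h‖_{L^q(μ)} < ∞`. -/
theorem statement_11 {N d : ℕ} (p q : ℝ) (hp : 1 < p) (hq : q = p / (p - 1))
    (L : ℝ → ℝ≥0∞) (hL : PenaltyAssumptions p L)
    (μ : Measure (PathD N d)) [IsProbabilityMeasure μ]
    (hmart : IsMartingaleMeasure μ)
    (hmom : Integrable (fun x : PathD N d => ‖x‖ ^ p) μ)
    (f : PathD N d → ℝ) (hf : ContDiff ℝ 1 f)
    (C : ℝ) (hgrow : ∀ n : ℕ, ∀ x : PathD N d,
      lpnorm q (Dn f n x) ≤ C * (1 + ‖x‖ ^ (p - 1))) :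
    Tendsto (fun δ : ℝ =>
        (((1 / δ : ℝ)) : EReal) * (VMartD p L μ f δ - ((∫ x, f x ∂μ : ℝ) : EReal)))
      (nhdsWithin 0 (Set.Ioi 0))
      (nhds (Lconj L
        (⨅ h : {h : ℕ → PathD N d → Fin d → ℝ // IsPredictable h ∧
            ∀ n : ℕ, 1 ≤ n → n ≤ N → Integrable (fun x => lpnorm q (h n x) ^ q) μ},
          (∑ n ∈ Finset.Icc 1 N,
            ∫ x, lpnorm q ((μ[Dn f n | Fn N d n]) x - h.1 n x) ^ q ∂μ) ^ (1 / q)))) :=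
  statement_11_general p q hp hq L hL.mono hL.growth μ hmart hmom f hf C hgrow

end
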